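/- A discrete group G is C*-simple if and only if for every state φ on C*_λ(G), the weak* closed convex hull of the orbit {g·φ : g ∈ G} contains the canonical tracial state τ_λ. -/

import Mathlib

noncomputable section
open scoped ENNReal ComplexOrder lp
open MeasureTheory
set_option maxHeartbeats 1000000
set_option synthInstance.maxHeartbeats 1000000

universe u

variable {G : Type u} [Group G]

theorem translat_mem (g : G) (f : ℓ²(G, ℂ)) : Memℓp (fun h => f (g⁻¹ * h)) 2 := by
  have hf : Summable fun i : G => ‖f i‖ ^ (2 : ℝ≥0∞).toReal :=
    (memℓp_gen_iff (by norm_num)).1 (lp.memℓp f)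
  exact memℓp_gen ((Equiv.mulLeft g⁻¹).summable_iff.2 hf)

/-- The left regular representation of `g ∈ G` as a linear isometric bijection of `ℓ²(G)`,
given by `(λ_g ξ)(h) = ξ(g⁻¹ h)`. -/
def lregE (g : G) : ℓ²(G, ℂ) ≃ₗᵢ[ℂ] ℓ²(G, ℂ) :=
{ toFun := fun f => ⟨fun h => f (g⁻¹ * h), translat_mem g f⟩
  invFun := fun f => ⟨fun h => f (g * h), by
    have := translat_mem g⁻¹ f; show Memℓp _ 2; simpa using this⟩
  map_add' := by intro f₁ f₂; ext h; simp [lp.coeFn_add]; rfl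
  map_smul' := by intro c f; ext h; simp [lp.coeFn_smul]
  left_inv := by intro f; ext h; simp
  right_inv := by intro f; ext h; simp
  norm_map' := by
    intro f
    rw [lp.norm_eq_tsum_rpow (by norm_num) f, lp.norm_eq_tsum_rpow (by norm_num)]
    congr 1
    exact (Equiv.mulLeft g⁻¹).tsum_eq (fun h => ‖f h‖ ^ (2 : ℝ≥0∞).toReal) }

/-- The left regular representation `λ` as bounded operators on `ℓ²(G)`. -/
def lreg (g : G) : ℓ²(G, ℂ) →L[ℂ] ℓ²(G, ℂ) :=
  (lregE g).toContinuousLinearEquiv.toContinuousLinearMap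

variable (G) in
/-- The reduced group C*-algebra `C*_λ(G)`: the norm-closed star subalgebra of the algebra of
bounded operators on `ℓ²(G)` generated by the image of the left regular representation. -/
def redCstar : StarSubalgebra ℂ (ℓ²(G, ℂ) →L[ℂ] ℓ²(G, ℂ)) :=
  (StarAlgebra.adjoin ℂ (Set.range (lreg (G := G)))).topologicalClosure

/-- `λ_g` as an element of the reduced group C*-algebra. -/
def uu (g : G) : redCstar G :=
  ⟨lreg g, StarSubalgebra.le_topologicalClosure _ (StarAlgebra.subset_adjoin ℂ _ ⟨g, rfl⟩)⟩

variable (G) in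
/-- `G` is C*-simple: `C*_λ(G)` has no closed two-sided ideals other than `{0}` and the
whole algebra. -/
def IsCstarSimple : Prop :=
  ∀ I : TwoSidedIdeal (redCstar G), IsClosed (I : Set (redCstar G)) → I = ⊥ ∨ I = ⊤

/-- The vector `δ_e ∈ ℓ²(G)`. -/
def deltaOne : ℓ²(G, ℂ) := letI := Classical.decEq G; lp.single 2 (1 : G) 1

variable (G) in
/-- The canonical tracial state `τ_λ(a) = ⟨a δ_e, δ_e⟩` on the reduced C*-algebra, as a
weak* continuous linear functional. -/
def tau : WeakDual ℂ (redCstar G) :=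
  (innerSL ℂ (deltaOne (G := G))).comp
    ((ContinuousLinearMap.apply ℂ ℓ²(G, ℂ) (deltaOne (G := G))).comp
      { toLinearMap := (redCstar G).subtype.toLinearMap, cont := continuous_subtype_val })

attribute [irreducible] redCstar lreg lregE deltaOne uu tau

/-- A state on `C*_λ(G)`: a unital positive (continuous) linear functional. -/
def IsState (φ : WeakDual ℂ (redCstar G)) : Prop :=
  φ 1 = 1 ∧ ∀ a : redCstar G, 0 ≤ φ (star a * a)

/-- The action of `G` on the dual of `C*_λ(G)`: `(g·φ)(a) = φ(λ_g⁻¹ a λ_g)`. -/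
def dualAct (g : G) (φ : WeakDual ℂ (redCstar G)) : WeakDual ℂ (redCstar G) :=
{ toFun := fun a => φ (uu g⁻¹ * a * uu g)
  map_add' := by
    intro a b
    show φ (uu g⁻¹ * (a + b) * uu g) = φ (uu g⁻¹ * a * uu g) + φ (uu g⁻¹ * b * uu g)
    rw [mul_add, add_mul, map_add]
  map_smul' := by
    intro c a
    show φ (uu g⁻¹ * (c • a) * uu g) = c • φ (uu g⁻¹ * a * uu g)
    rw [mul_smul_comm, smul_mul_assoc, _root_.map_smul]
  cont := (map_continuous φ).comp
      ((continuous_const.mul continuous_id).mul continuous_const) }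

theorem dualAct_continuous (g : G) : Continuous (dualAct (G := G) g) := by
  apply WeakDual.continuous_of_continuous_eval
  intro a
  exact WeakDual.eval_continuous (uu g⁻¹ * a * uu g)


set_option linter.all false

section StateLemmas

variable {A : Type*} [CStarAlgebra A]

/-- A unital contractive functional. -/
def St (χ : A →L[ℂ] ℂ) : Prop := χ 1 = 1 ∧ ∀ a, ‖χ a‖ ≤ ‖a‖

theorem St.im_eq_zero {χ : A →L[ℂ] ℂ} (h : St χ) {a : A} (ha : IsSelfAdjoint a) :
    (χ a).im = 0 := by
  have key : ∀ t : ℝ, (χ a).im ^ 2 + 2 * (χ a).im * t ≤ ‖a‖ ^ 2 * 1 := by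
    intro t
    have h1 : ‖χ (a + (Complex.I * t) • (1 : A))‖ ≤ ‖a + (Complex.I * t) • (1 : A)‖ := h.2 _
    have h2 : ‖a + (Complex.I * t) • (1 : A)‖ ^ 2 ≤ ‖a‖ ^ 2 + t ^ 2 := by
      rw [sq, ← CStarRing.norm_star_mul_self]
      have : star (a + (Complex.I * t) • (1 : A)) * (a + (Complex.I * t) • (1 : A))
          = a * a + ((t : ℂ) ^ 2) • (1 : A) := by
        simp only [star_add, ha.star_eq, star_smul, star_one, star_mul', Complex.star_def,
          Complex.conj_I, Complex.conj_ofReal]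
        simp only [add_mul, mul_add, smul_mul_assoc, mul_smul_comm, one_mul, mul_one, smul_smul]
        have e1 : (Complex.I * (t : ℂ)) * (-Complex.I * t) = (t : ℂ) ^ 2 := by
          have := Complex.I_mul_I
          linear_combination (-(t : ℂ) ^ 2) * this
        rw [smul_add, smul_smul, e1]
        module
      rw [this]
      refine (norm_add_le _ _).trans ?_
      gcongr
      · rw [sq]; exact norm_mul_le _ _
      · rw [norm_smul]
        cases subsingleton_or_nontrivial A
        · have : ‖(1 : A)‖ = 0 := by rw [Subsingleton.elim (1 : A) 0, norm_zero]
          rw [this, mul_zero]; positivity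
        · rw [norm_one]; simp
    have h3 : ‖χ (a + (Complex.I * t) • (1 : A))‖ ^ 2 ≤ ‖a‖ ^ 2 + t ^ 2 :=
      (pow_le_pow_left₀ (norm_nonneg _) h1 2).trans h2
    rw [map_add, map_smul, h.1, Complex.sq_norm, Complex.normSq_apply] at h3
    simp at h3
    nlinarith [sq_nonneg (χ a).re]
  by_contra hne
  have := key ((‖a‖ ^ 2 + 1) / (2 * (χ a).im))
  rw [mul_div_assoc', mul_comm, mul_div_assoc] at this
  have e : (2 * (χ a).im) / (2 * (χ a).im) = 1 := div_self (by simpa using hne)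
  have h9 := sq_nonneg (χ a).im
  rw [e] at this
  linarith

theorem St.nonneg {χ : A →L[ℂ] ℂ} (h : St χ) (a : A) : 0 ≤ χ (star a * a) := by
  letI := CStarAlgebra.spectralOrder A
  letI := CStarAlgebra.spectralOrderedRing A
  have sa : IsSelfAdjoint (star a * a) := IsSelfAdjoint.star_mul_self a
  have him := h.im_eq_zero sa
  set b := star a * a with hb
  have hb0 : 0 ≤ b := star_mul_self_nonneg a
  have h1 : ‖algebraMap ℝ A ‖b‖ - b‖ ≤ ‖algebraMap ℝ A ‖b‖‖ := by
    apply CStarAlgebra.norm_le_norm_of_nonneg_of_le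
    · exact sub_nonneg.2 (IsSelfAdjoint.le_algebraMap_norm_self sa)
    · exact sub_le_self _ hb0
  have h2 : ‖algebraMap ℝ A ‖b‖‖ ≤ ‖b‖ := by
    rw [Algebra.algebraMap_eq_smul_one, norm_smul]
    cases subsingleton_or_nontrivial A
    · have : ‖(1 : A)‖ = 0 := by rw [Subsingleton.elim (1 : A) 0, norm_zero]
      rw [this]; simp
    · rw [norm_one]; simp
  have h3 := (h.2 (algebraMap ℝ A ‖b‖ - b)).trans (h1.trans h2)
  have e : algebraMap ℝ A ‖b‖ = (‖b‖ : ℂ) • (1 : A) := by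
    rw [Algebra.algebraMap_eq_smul_one]; simp
  rw [map_sub, e, map_smul, h.1] at h3
  have h4 := (Complex.abs_re_le_norm _).trans h3
  simp at h4
  have := (abs_le.1 h4).2
  rw [Complex.nonneg_iff]
  exact ⟨by linarith, him.symm⟩

theorem pos_star {χ : A →L[ℂ] ℂ} (h : ∀ a, 0 ≤ χ (star a * a)) (a : A) :
    χ (star a) = star (χ a) := by
  have im1 : ∀ a, (χ (star a * a)).im = 0 := fun a => (Complex.nonneg_iff.1 (h a)).2.symm
  have h1 := im1 (1 + a)
  have h2 := im1 (1 + Complex.I • a)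
  have h0 := im1 1
  have ha := im1 a
  simp [add_mul, mul_add] at h1 h2 h0
  apply Complex.ext
  · simp; linarith
  · simp; linarith

theorem pos_cs {χ : A →L[ℂ] ℂ} (h : ∀ a, 0 ≤ χ (star a * a)) {x : A}
    (hx : χ (star x * x) = 0) (T : A) : χ (T * x) = 0 := by
  have key : ∀ z : ℂ, 0 ≤ (χ (T * star T)).re + 2 * (z * χ (T * x)).re := by
    intro z
    have := (Complex.nonneg_iff.1 (h (star T + z • x))).1
    simp only [star_add, star_star, star_smul, add_mul, mul_add, smul_mul_assoc, mul_smul_comm,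
      map_add, map_smul, hx, smul_zero, add_zero] at this
    have e : χ (star x * star T) = star (χ (T * x)) := by
      rw [← star_mul, pos_star h]
    rw [e] at this
    simp at this ⊢
    linarith
  by_contra hne
  set c := χ (T * x) with hc
  set B := (χ (T * star T)).re
  have := key (-((B + 1 : ℝ) : ℂ) / c)
  rw [div_mul_cancel₀ _ hne] at this
  simp at this
  have hB : 0 ≤ B := by
    have := (Complex.nonneg_iff.1 (h (star T))).1
    simpa using this
  linarith

theorem pos_cs' {χ : A →L[ℂ] ℂ} (h : ∀ a, 0 ≤ χ (star a * a)) {x : A}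
    (hx : χ (x * star x) = 0) (T : A) : χ (x * T) = 0 := by
  have := pos_cs h (x := star x) (by simpa using hx) (star T)
  rw [← star_mul, pos_star h] at this
  simpa using this

theorem pos_St {χ : A →L[ℂ] ℂ} (h1 : χ 1 = 1) (h : ∀ a, 0 ≤ χ (star a * a)) : St χ := by
  refine ⟨h1, fun a => ?_⟩
  letI := CStarAlgebra.spectralOrder A
  letI := CStarAlgebra.spectralOrderedRing A
  have sa : IsSelfAdjoint (star a * a) := IsSelfAdjoint.star_mul_self a
  have hle : 0 ≤ (‖a‖ ^ 2 : ℝ) - (χ (star a * a)).re := by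
    have h2 : 0 ≤ algebraMap ℝ A ‖star a * a‖ - star a * a :=
      sub_nonneg.2 (IsSelfAdjoint.le_algebraMap_norm_self sa)
    obtain ⟨b, hb⟩ := CStarAlgebra.nonneg_iff_eq_star_mul_self.1 h2
    have h3 := h b
    rw [← hb, CStarRing.norm_star_mul_self] at h3
    have e : algebraMap ℝ A (‖a‖ * ‖a‖) = ((‖a‖ ^ 2 : ℝ) : ℂ) • (1 : A) := by
      rw [Algebra.algebraMap_eq_smul_one, sq, Complex.coe_smul]
    rw [map_sub, e, map_smul, h1] at h3
    have := (Complex.nonneg_iff.1 h3).1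
    simp at this ⊢
    rw [← Complex.ofReal_pow, Complex.ofReal_re] at this
    exact this
  have hsq : ‖χ a‖ ^ 2 ≤ (χ (star a * a)).re := by
    have := (Complex.nonneg_iff.1 (h (a - (χ a) • (1 : A)))).1
    simp only [star_sub, star_smul, star_one, sub_mul, mul_sub, smul_mul_assoc, mul_smul_comm,
      map_sub, map_smul, one_mul, mul_one, h1, pos_star h] at this
    rw [Complex.sq_norm, Complex.normSq_apply]
    simp at this
    linarith
  exact (pow_le_pow_iff_left₀ (norm_nonneg _) (norm_nonneg _) two_ne_zero).1 (by linarith)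

end StateLemmas


section Means

/-- Bounded complex functions on a set. -/
abbrev Linf (X : Type*) := lp (fun _ : X => ℂ) ∞

/-- Construct a bounded function. -/
def Linf.mk {X : Type*} (f : X → ℂ) (C : ℝ) (h : ∀ x, ‖f x‖ ≤ C) : Linf X :=
  ⟨f, memℓp_infty ⟨C, by rintro _ ⟨x, rfl⟩; exact h x⟩⟩

@[simp] theorem Linf.mk_apply {X : Type*} (f : X → ℂ) (C : ℝ) (h : ∀ x, ‖f x‖ ≤ C) (x : X) :
    Linf.mk f C h x = f x := rfl

theorem Linf.apply_le {X : Type*} (f : Linf X) (x : X) : ‖f x‖ ≤ ‖f‖ :=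
  lp.norm_apply_le_norm ENNReal.top_ne_zero f x

@[simp] theorem Linf.one_apply {X : Type*} (x : X) : (1 : Linf X) x = 1 := rfl
@[simp] theorem Linf.mul_apply {X : Type*} (f g : Linf X) (x : X) : (f * g) x = f x * g x := rfl
@[simp] theorem Linf.star_apply {X : Type*} (f : Linf X) (x : X) : (star f) x = star (f x) := rfl
@[simp] theorem Linf.add_apply {X : Type*} (f g : Linf X) (x : X) : (f + g) x = f x + g x := rfl
@[simp] theorem Linf.smul_apply {X : Type*} (c : ℂ) (f : Linf X) (x : X) :
    (c • f) x = c * f x := rfl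
theorem Linf.rsmul_apply {X : Type*} (c : ℝ) (f : Linf X) (x : X) :
    (c • f) x = c * f x := by
  change c • f x = c * f x
  simp

variable {G : Type*} [Group G]

/-- A contractive linear action of `G`. -/
structure GAct (G : Type*) [Group G] (E : Type*) [NormedAddCommGroup E] [NormedSpace ℂ E] where
  α : G → E →L[ℂ] E
  norm_le : ∀ g T, ‖α g T‖ ≤ ‖T‖
  mul : ∀ g h T, α (g * h) T = α g (α h T)
  one : ∀ T, α 1 T = T

variable {E : Type*} [NormedAddCommGroup E] [NormedSpace ℂ E]

/-- The Poisson map of a functional. -/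
def GAct.Phi (a : GAct G E) (χ : E →L[ℂ] ℂ) : E →L[ℂ] Linf G :=
  LinearMap.mkContinuous
    { toFun := fun T => Linf.mk (fun g => χ (a.α g⁻¹ T)) (‖χ‖ * ‖T‖) (fun g =>
        (χ.le_opNorm _).trans (by gcongr; exact a.norm_le _ _))
      map_add' := by intro S T; ext g; simp
      map_smul' := by intro c T; ext g; simp }
    ‖χ‖ (fun T => lp.norm_le_of_forall_le (by positivity) (fun g =>
        (χ.le_opNorm _).trans (by gcongr; exact a.norm_le _ _)))

@[simp] theorem GAct.Phi_apply (a : GAct G E) (χ : E →L[ℂ] ℂ) (T : E) (g : G) :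
    a.Phi χ T g = χ (a.α g⁻¹ T) := rfl

/-- The action of functionals on `ℓ^∞(G)` on functionals on `E`. -/
def GAct.conv (a : GAct G E) (μ : Linf G →L[ℂ] ℂ) (χ : E →L[ℂ] ℂ) : E →L[ℂ] ℂ :=
  μ.comp (a.Phi χ)

theorem GAct.conv_apply (a : GAct G E) (μ : Linf G →L[ℂ] ℂ) (χ : E →L[ℂ] ℂ) (T : E) :
    a.conv μ χ T = μ (a.Phi χ T) := rfl

variable (G) in
/-- Translation action on `ℓ^∞(G)`. -/
def ltr : GAct G (Linf G) where
  α g := LinearMap.mkContinuous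
    { toFun := fun f => Linf.mk (fun h => f (g⁻¹ * h)) ‖f‖ (fun h => Linf.apply_le f _)
      map_add' := by intro S T; ext g; simp
      map_smul' := by intro c T; ext g; simp }
    1 (fun f => lp.norm_le_of_forall_le (by positivity) (fun h => by
      rw [one_mul]; exact Linf.apply_le f _))
  norm_le g f := lp.norm_le_of_forall_le (by positivity) (fun h => Linf.apply_le f _)
  mul g h f := by
    ext x
    change f ((g * h)⁻¹ * x) = f (h⁻¹ * (g⁻¹ * x))
    simp [mul_assoc]
  one f := by
    ext x
    change f ((1 : G)⁻¹ * x) = f x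
    simp

@[simp] theorem ltr_apply (g : G) (f : Linf G) (x : G) : (ltr G).α g f x = f (g⁻¹ * x) := rfl

theorem GAct.Phi_conv (a : GAct G E) (ν : Linf G →L[ℂ] ℂ) (χ : E →L[ℂ] ℂ) :
    a.Phi (a.conv ν χ) = ((ltr G).Phi ν).comp (a.Phi χ) := by
  ext T g
  change ν (a.Phi χ (a.α g⁻¹ T)) = ν ((ltr G).α g⁻¹ (a.Phi χ T))
  congr 1
  ext h
  simp [← a.mul]

theorem GAct.conv_assoc (a : GAct G E) (μ ν : Linf G →L[ℂ] ℂ) (χ : E →L[ℂ] ℂ) :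
    a.conv μ (a.conv ν χ) = a.conv ((ltr G).conv μ ν) χ := by
  unfold GAct.conv
  have := a.Phi_conv ν χ
  unfold GAct.conv at this
  rw [this]; rfl

theorem St.conv {B : Type*} [CStarAlgebra B] (a : GAct G B) (ha : ∀ g, a.α g 1 = 1)
    {μ : Linf G →L[ℂ] ℂ} (hμ : St μ) {χ : B →L[ℂ] ℂ} (hχ : St χ) : St (a.conv μ χ) := by
  constructor
  · rw [GAct.conv_apply]
    have : a.Phi χ 1 = 1 := by ext g; simp [ha, hχ.1]
    rw [this, hμ.1]
  · intro b
    refine (hμ.2 _).trans (lp.norm_le_of_forall_le (by positivity) (fun g => ?_))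
    exact (hχ.2 _).trans (a.norm_le _ _)

theorem ltr_one (g : G) : (ltr G).α g 1 = 1 := by ext; simp

theorem conv_add_smul (a : GAct G E) (μ : Linf G →L[ℂ] ℂ) (x y : E →L[ℂ] ℂ) (s t : ℝ) :
    a.conv μ (s • x + t • y) = s • a.conv μ x + t • a.conv μ y := by
  ext T
  have : a.Phi (s • x + t • y) T = (s : ℂ) • a.Phi x T + (t : ℂ) • a.Phi y T := by
    ext g
    change s • x (a.α g⁻¹ T) + t • y (a.α g⁻¹ T) = (s : ℂ) * x (a.α g⁻¹ T) + (t : ℂ) * y (a.α g⁻¹ T)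
    simp
  rw [GAct.conv_apply, this, map_add, _root_.map_smul, _root_.map_smul]
  change (s : ℂ) * _ + (t : ℂ) * _ = s • (a.conv μ x T) + t • (a.conv μ y T)
  simp [GAct.conv_apply]

theorem conv_add_smul_left (a : GAct G E) (μ ν : Linf G →L[ℂ] ℂ) (x : E →L[ℂ] ℂ) (s t : ℝ) :
    a.conv (s • μ + t • ν) x = s • a.conv μ x + t • a.conv ν x := by
  rfl

variable (G) in
/-- The set of means, in the weak-* topology. -/
def Mn : Set (WeakDual ℂ (Linf G)) := {m | St (WeakDual.toStrongDual m)}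

theorem Mn_closed : IsClosed (Mn G) := by
  have : Mn G = {m : WeakDual ℂ (Linf G) | m 1 = 1} ∩ ⋂ a, {m | ‖m a‖ ≤ ‖a‖} := by
    ext m; simp [Mn, St]
  rw [this]
  refine (isClosed_eq (WeakDual.eval_continuous 1) continuous_const).inter
    (isClosed_iInter fun a => isClosed_le (WeakDual.eval_continuous a).norm continuous_const)

theorem Mn_compact : IsCompact (Mn G) := by
  refine (WeakDual.isCompact_closedBall (0 : StrongDual ℂ (Linf G)) 1).of_isClosed_subset
    Mn_closed ?_
  intro m hm
  simp only [Set.mem_preimage, mem_closedBall_zero_iff]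
  refine ContinuousLinearMap.opNorm_le_bound _ zero_le_one (fun a => ?_)
  rw [one_mul]; exact hm.2 a

theorem Mn_convex : Convex ℝ (Mn G) := by
  intro x hx y hy s t hs ht hst
  constructor
  · change s • (WeakDual.toStrongDual x 1) + t • (WeakDual.toStrongDual y 1) = 1
    rw [hx.1, hy.1, ← add_smul, hst, one_smul]
  · intro a
    change ‖s • (WeakDual.toStrongDual x a) + t • (WeakDual.toStrongDual y a)‖ ≤ ‖a‖
    refine (norm_add_le _ _).trans ?_
    rw [norm_smul, norm_smul, Real.norm_of_nonneg hs, Real.norm_of_nonneg ht]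
    calc _ ≤ s * ‖a‖ + t * ‖a‖ := by gcongr <;> [exact hx.2 a; exact hy.2 a]
      _ = ‖a‖ := by rw [← add_mul, hst, one_mul]

/-- Right multiplication in the semigroup of functionals. -/
def cv (μ ν : WeakDual ℂ (Linf G)) : WeakDual ℂ (Linf G) :=
  StrongDual.toWeakDual ((ltr G).conv (WeakDual.toStrongDual μ) (WeakDual.toStrongDual ν))

theorem cv_apply (μ ν : WeakDual ℂ (Linf G)) (f : Linf G) :
    cv μ ν f = μ ((ltr G).Phi (WeakDual.toStrongDual ν) f) := rfl

theorem cv_continuous (ν : WeakDual ℂ (Linf G)) : Continuous (fun μ => cv μ ν) := by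
  apply WeakDual.continuous_of_continuous_eval
  intro f
  exact WeakDual.eval_continuous ((ltr G).Phi (WeakDual.toStrongDual ν) f)

theorem cv_assoc (μ ν p : WeakDual ℂ (Linf G)) : cv μ (cv ν p) = cv (cv μ ν) p :=
  congrArg StrongDual.toWeakDual ((ltr G).conv_assoc _ _ _)

theorem cv_mem {μ ν : WeakDual ℂ (Linf G)} (hμ : μ ∈ Mn G) (hν : ν ∈ Mn G) : cv μ ν ∈ Mn G :=
  St.conv (ltr G) ltr_one hμ hν

theorem cv_right (μ x y : WeakDual ℂ (Linf G)) (s t : ℝ) :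
    cv μ (s • x + t • y) = s • cv μ x + t • cv μ y :=
  conv_add_smul (ltr G) _ _ _ s t

theorem cv_left (x y p : WeakDual ℂ (Linf G)) (s t : ℝ) :
    cv (s • x + t • y) p = s • cv x p + t • cv y p :=
  conv_add_smul_left (ltr G) _ _ _ s t

/-- Evaluation at the identity is a mean. -/
def evOne : WeakDual ℂ (Linf G) := StrongDual.toWeakDual
  (LinearMap.mkContinuous
    { toFun := fun f : Linf G => f 1
      map_add' := fun _ _ => rfl
      map_smul' := fun _ _ => rfl } 1 (fun f => by rw [one_mul]; exact Linf.apply_le f 1))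

theorem evOne_mem : (evOne : WeakDual ℂ (Linf G)) ∈ Mn G :=
  ⟨rfl, fun f => Linf.apply_le f 1⟩

variable (G) in
/-- Closed left ideals of the semigroup of means. -/
def LId : Set (Set (WeakDual ℂ (Linf G))) :=
  {K | K ⊆ Mn G ∧ IsClosed K ∧ K.Nonempty ∧ ∀ μ ∈ Mn G, ∀ k ∈ K, cv μ k ∈ K}

variable (G) in
theorem exists_min : ∃ L, Minimal (· ∈ LId G) L := by
  have H : ∀ c ⊆ LId G, IsChain (· ⊆ ·) c → c.Nonempty → ∃ lb ∈ LId G, ∀ s ∈ c, lb ⊆ s := by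
    intro c hc hch hne
    refine ⟨⋂₀ c, ⟨?_, ?_, ?_, ?_⟩, fun s hs => Set.sInter_subset_of_mem hs⟩
    · obtain ⟨s, hs⟩ := hne
      exact (Set.sInter_subset_of_mem hs).trans (hc hs).1
    · exact isClosed_sInter fun s hs => (hc hs).2.1
    · haveI : Nonempty c := hne.to_subtype
      apply IsCompact.nonempty_sInter_of_directed_nonempty_isCompact_isClosed
      · intro s hs t ht
        rcases hch.total hs ht with h | h
        · exact ⟨s, hs, subset_rfl, h⟩
        · exact ⟨t, ht, h, subset_rfl⟩
      · exact fun s hs => (hc hs).2.2.1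
      · exact fun s hs => Mn_compact.of_isClosed_subset (hc hs).2.1 (hc hs).1
      · exact fun s hs => (hc hs).2.1
    · intro μ hμ k hk s hs
      exact (hc hs).2.2.2 μ hμ k (hk s hs)
  obtain ⟨L, -, hL⟩ := zorn_superset_nonempty (LId G) H (Mn G)
    ⟨subset_rfl, Mn_closed, ⟨_, evOne_mem⟩, fun μ hμ k hk => cv_mem hμ hk⟩
  exact ⟨L, hL⟩

theorem min_eq {L : Set (WeakDual ℂ (Linf G))} (hL : Minimal (· ∈ LId G) L) {k} (hk : k ∈ L) :
    (fun μ => cv μ k) '' Mn G = L := by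
  have sub : (fun μ => cv μ k) '' Mn G ⊆ L := by
    rintro _ ⟨μ, hμ, rfl⟩; exact hL.prop.2.2.2 μ hμ k hk
  refine Set.Subset.antisymm sub (hL.2 (y := (fun μ => cv μ k) '' Mn G) ⟨sub.trans hL.prop.1, ?_, ⟨_, evOne, evOne_mem, rfl⟩, ?_⟩ sub)
  · exact (Mn_compact.image (cv_continuous k)).isClosed
  · rintro μ hμ _ ⟨ν, hν, rfl⟩
    exact ⟨cv μ ν, cv_mem hμ hν, (cv_assoc _ _ _).symm⟩

variable (G) in
theorem exists_mean : ∃ (L : Set (WeakDual ℂ (Linf G))), ∃ q ∈ L,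
    L ⊆ Mn G ∧ (∀ μ ∈ Mn G, ∀ p ∈ L, cv μ p ∈ L) ∧ (∀ p ∈ L, cv q p = q) ∧
    ∀ x ∈ L, ∀ y ∈ L, ∀ s t : ℝ, 0 < s → 0 < t → s + t = 1 → s • x + t • y = q → x = q := by
  obtain ⟨L, hL⟩ := exists_min G
  have hcomp : IsCompact L := Mn_compact.of_isClosed_subset hL.prop.2.1 hL.prop.1
  haveI : LocallyConvexSpace ℝ (WeakDual ℂ (Linf G)) :=
    inferInstanceAs (LocallyConvexSpace ℝ (WeakBilin (topDualPairing ℂ (Linf G))))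
  obtain ⟨q, hq⟩ := hcomp.extremePoints_nonempty hL.prop.2.2.1
  have hconv : Convex ℝ L := by
    rw [← min_eq hL hq.1]
    rintro _ ⟨x, hx, rfl⟩ _ ⟨y, hy, rfl⟩ s t hs ht hst
    exact ⟨s • x + t • y, Mn_convex hx hy hs ht hst, cv_left _ _ _ _ _⟩
  have hext : ∀ x ∈ L, ∀ y ∈ L, ∀ s t : ℝ, 0 < s → 0 < t → s + t = 1 →
      s • x + t • y = q → x = q := by
    intro x hx y hy s t hs ht hst h
    exact hq.2 hx hy ⟨s, t, hs, ht, hst, h⟩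
  refine ⟨L, q, hq.1, hL.prop.1, hL.prop.2.2.2, ?_, hext⟩
  intro p hp
  let R : WeakDual ℂ (Linf G) → WeakDual ℂ (Linf G) := fun x => (1/2 : ℝ) • x + (1/2 : ℝ) • cv x p
  have hRc : Continuous R := by
    apply WeakDual.continuous_of_continuous_eval
    intro f
    exact ((WeakDual.eval_continuous f).const_smul (1/2 : ℝ)).add
      (((WeakDual.eval_continuous f).comp (cv_continuous p)).const_smul (1/2 : ℝ))
  have hRL : R '' L ⊆ L := by
    rintro _ ⟨x, hx, rfl⟩
    exact hconv hx (hL.prop.2.2.2 x (hL.prop.1 hx) p hp) (by norm_num) (by norm_num) (by norm_num)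
  have := hL.2 (y := R '' L) ⟨hRL.trans hL.prop.1, (hcomp.image hRc).isClosed,
    ⟨_, q, hq.1, rfl⟩, ?_⟩ hRL
  · obtain ⟨x, hx, hxq⟩ := this hq.1
    have hx2 := hL.prop.2.2.2 x (hL.prop.1 hx) p hp
    have e1 : x = q := hext x hx _ hx2 _ _ (by norm_num) (by norm_num) (by norm_num) hxq
    have e2 : cv x p = q := hext _ hx2 x hx (1/2) (1/2) (by norm_num) (by norm_num) (by norm_num)
      (by rw [add_comm]; exact hxq)
    rw [e1] at e2; exact e2
  · rintro μ hμ _ ⟨x, hx, rfl⟩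
    refine ⟨cv μ x, hL.prop.2.2.2 μ hμ x hx, ?_⟩
    simp only [R]
    rw [cv_right, cv_assoc]

end Means


section Extremal

variable {G : Type*} [Group G]

/-- The properties of the chosen mean. -/
structure Good (q : Linf G →L[ℂ] ℂ) (L : Set (Linf G →L[ℂ] ℂ)) : Prop where
  q_mem : q ∈ L
  st : ∀ p ∈ L, St p
  conv_mem : ∀ μ, St μ → ∀ p ∈ L, (ltr G).conv μ p ∈ L
  rig : ∀ p ∈ L, (ltr G).conv q p = q
  ext : ∀ x ∈ L, ∀ y ∈ L, ∀ s t : ℝ, 0 < s → 0 < t → s + t = 1 → s • x + t • y = q → x = q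

variable (G) in
theorem exists_good : ∃ (q : Linf G →L[ℂ] ℂ) (L : Set (Linf G →L[ℂ] ℂ)), Good q L := by
  obtain ⟨L, q, hq, h1, h2, h3, h4⟩ := exists_mean G
  exact ⟨WeakDual.toStrongDual q, {p | StrongDual.toWeakDual p ∈ L}, hq, fun p hp => h1 hp,
    fun μ hμ p hp => h2 _ hμ _ hp, fun p hp => h3 _ hp, fun x hx y hy s t hs ht hst h =>
      h4 _ hx _ hy s t hs ht hst h⟩

theorem Good.qst {q : Linf G →L[ℂ] ℂ} {L} (h : Good q L) : St q := h.st _ h.q_mem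

theorem St.nonneg_of {X : Type*} {μ : Linf X →L[ℂ] ℂ} (hμ : St μ) (f : Linf X)
    (hf : ∀ x, 0 ≤ f x) : 0 ≤ μ f := by
  have hb : ∀ x, ‖((Real.sqrt (f x).re : ℝ) : ℂ)‖ ≤ Real.sqrt ‖f‖ := by
    intro x
    rw [Complex.norm_real, Real.norm_of_nonneg (Real.sqrt_nonneg _)]
    exact Real.sqrt_le_sqrt ((Complex.re_le_norm _).trans (Linf.apply_le f x))
  have : f = star (Linf.mk _ _ hb) * Linf.mk _ _ hb := by
    ext x
    rw [Linf.mul_apply, Linf.star_apply, Linf.mk_apply]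
    have h1 := hf x
    rw [Complex.nonneg_iff] at h1
    apply Complex.ext
    · simp [Real.mul_self_sqrt h1.1]
    · simp [← h1.2]
  rw [this]
  exact hμ.nonneg _

theorem St.sub {X : Type*} {μ : Linf X →L[ℂ] ℂ} (hμ : St μ) (c : Linf X)
    (hc : ∀ x, 0 ≤ c x) (t : ℝ) (ht : 0 < t) (h : μ c = t) :
    St (t⁻¹ • μ.comp (ContinuousLinearMap.mul ℂ (Linf X) c)) := by
  apply pos_St
  · change t⁻¹ • μ (c * 1) = 1
    rw [mul_one, h, Complex.real_smul]
    push_cast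
    exact inv_mul_cancel₀ (by exact_mod_cast ht.ne')
  · intro a
    change 0 ≤ t⁻¹ • μ (c * (star a * a))
    rw [Complex.real_smul]
    apply mul_nonneg
    · exact_mod_cast (inv_pos.2 ht).le
    · apply hμ.nonneg_of
      intro x
      rw [Linf.mul_apply]
      exact mul_nonneg (hc x) (by rw [Linf.mul_apply, Linf.star_apply]; exact star_mul_self_nonneg _)

variable {q μ : Linf G →L[ℂ] ℂ} {L : Set (Linf G →L[ℂ] ℂ)}

theorem Good.mul_aux (H : Good q L) (hμ : St μ) (hq : (ltr G).conv μ q = q)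
    (c : Linf G) (hc1 : ∀ x, (1/4 : ℂ) ≤ c x) (hc2 : ∀ x, c x ≤ (3/4 : ℂ)) (f : Linf G) :
    μ (c * (ltr G).Phi q f) = μ c * q f := by
  have hμc1 : 0 ≤ μ (c - (1/4 : ℂ) • 1) := hμ.nonneg_of _ (fun x => by
    change 0 ≤ c x - (1/4 : ℂ) * 1
    rw [mul_one]; exact sub_nonneg.2 (hc1 x))
  have hμc2 : 0 ≤ μ ((3/4 : ℂ) • 1 - c) := hμ.nonneg_of _ (fun x => by
    change 0 ≤ (3/4 : ℂ) * 1 - c x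
    rw [mul_one]; exact sub_nonneg.2 (hc2 x))
  rw [map_sub, _root_.map_smul, hμ.1, Complex.nonneg_iff] at hμc1 hμc2
  simp at hμc1 hμc2
  obtain ⟨t, ht⟩ : ∃ t : ℝ, μ c = t := ⟨(μ c).re, Complex.ext rfl (by simp [← hμc1.2])⟩
  rw [ht] at hμc1 hμc2
  simp at hμc1 hμc2
  have t0 : 0 < t := by linarith [hμc1]
  have t1 : 0 < 1 - t := by linarith [hμc2]
  have q14 : (0 : ℂ) ≤ 1/4 := by rw [Complex.nonneg_iff]; norm_num
  have q34 : (3/4 : ℂ) ≤ 1 := by rw [Complex.le_def]; norm_num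
  have s1 := hμ.sub c (fun x => q14.trans (hc1 x)) t t0 ht
  have s2 := hμ.sub (1 - c) (fun x => by
    change 0 ≤ 1 - c x
    exact sub_nonneg.2 ((hc2 x).trans q34)) (1 - t) t1 (by rw [map_sub, hμ.1, ht]; simp)
  have key := H.ext _ (H.conv_mem _ s1 q H.q_mem) _ (H.conv_mem _ s2 q H.q_mem) t (1 - t) t0 t1
    (by ring) (by
      rw [← conv_add_smul_left]
      conv_rhs => rw [← hq]
      congr 1
      rw [smul_smul, smul_smul, mul_inv_cancel₀ t0.ne', mul_inv_cancel₀ t1.ne', one_smul, one_smul]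
      ext x
      change μ (c * x) + μ ((1 - c) * x) = μ x
      rw [← map_add, ← add_mul]; congr 1; simp)
  have := DFunLike.congr_fun key f
  change t⁻¹ • μ (c * (ltr G).Phi q f) = q f at this
  rw [← this, ht, Complex.real_smul, ← mul_assoc]
  push_cast
  rw [mul_inv_cancel₀ (by exact_mod_cast t0.ne'), one_mul]

theorem Good.mul_real (H : Good q L) (hμ : St μ) (hq : (ltr G).conv μ q = q)
    (c : Linf G) (hc : ∀ x, (c x).im = 0) (f : Linf G) :
    μ (c * (ltr G).Phi q f) = μ c * q f := by
  have h1 : μ ((ltr G).Phi q f) = q f := by rw [← GAct.conv_apply, hq]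
  set N : ℝ := ‖c‖ + 1 with hN
  have N0 : 0 < N := by positivity
  have hb : ∀ x, |(c x).re| ≤ N := fun x =>
    (Complex.abs_re_le_norm _).trans ((Linf.apply_le c x).trans (by linarith))
  have hN' : (N : ℂ) ≠ 0 := by exact_mod_cast N0.ne'
  have hcx : ∀ x, ((1/2 : ℂ) • (1 : Linf G) + ((1 / (4 * N) : ℝ) : ℂ) • c) x =
      ((1/2 + (c x).re / (4 * N) : ℝ) : ℂ) := by
    intro x
    change (1/2 : ℂ) * 1 + ((1 / (4 * N) : ℝ) : ℂ) * c x = _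
    have : c x = ((c x).re : ℂ) := Complex.ext rfl (by simp [hc x])
    conv_lhs => rw [this]
    push_cast; ring
  have hb2 : ∀ x, |(c x).re / (4 * N)| ≤ 1/4 := by
    intro x
    rw [abs_div, abs_of_pos (show (0:ℝ) < 4 * N by positivity), div_le_iff₀ (by positivity)]
    linarith [hb x]
  have key := H.mul_aux hμ hq ((1/2 : ℂ) • (1 : Linf G) + ((1 / (4 * N) : ℝ) : ℂ) • c)
    (fun x => by
      rw [hcx x]
      have := (abs_le.1 (hb2 x)).1
      rw [show (1/4 : ℂ) = ((1/4 : ℝ) : ℂ) by norm_num]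
      exact Complex.real_le_real.2 (by linarith))
    (fun x => by
      rw [hcx x]
      have := (abs_le.1 (hb2 x)).2
      rw [show (3/4 : ℂ) = ((3/4 : ℝ) : ℂ) by norm_num]
      exact Complex.real_le_real.2 (by linarith)) f
  rw [add_mul, smul_mul_assoc, smul_mul_assoc, one_mul, map_add, map_add, _root_.map_smul,
    _root_.map_smul, _root_.map_smul, _root_.map_smul, hμ.1, h1] at key
  simp only [smul_eq_mul, add_mul, mul_one] at key
  have k2 := add_left_cancel key
  rw [mul_assoc] at k2
  refine mul_left_cancel₀ ?_ k2
  exact_mod_cast (by positivity : (1 / (4 * N)) ≠ 0)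

theorem Good.mul (H : Good q L) (hμ : St μ) (hq : (ltr G).conv μ q = q) (c f : Linf G) :
    μ (c * (ltr G).Phi q f) = μ c * q f := by
  let a : Linf G := Linf.mk (fun x => ((c x).re : ℂ)) ‖c‖ (fun x => by
    rw [Complex.norm_real]
    exact (Complex.abs_re_le_norm _).trans (Linf.apply_le c x))
  let b : Linf G := Linf.mk (fun x => ((c x).im : ℂ)) ‖c‖ (fun x => by
    rw [Complex.norm_real]
    exact (Complex.abs_im_le_norm _).trans (Linf.apply_le c x))
  have : c = a + Complex.I • b := by
    ext x
    change c x = ((c x).re : ℂ) + Complex.I * ((c x).im : ℂ)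
    rw [mul_comm, Complex.re_add_im]
  rw [this, add_mul, smul_mul_assoc, map_add, map_add, _root_.map_smul, _root_.map_smul,
    H.mul_real hμ hq a (fun x => Complex.ofReal_im _), H.mul_real hμ hq b (fun x => Complex.ofReal_im _)]
  simp only [smul_eq_mul]; ring

end Extremal


section K

variable {G : Type*} [Group G] {B : Type*} [CStarAlgebra B]

/-- Pull back a functional along a star homomorphism. -/
def pb {A B : Type*} [CStarAlgebra A] [CStarAlgebra B] (N : A →⋆ₐ[ℂ] B) (χ : B →L[ℂ] ℂ) : A →L[ℂ] ℂ :=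
  LinearMap.mkContinuous
    { toFun := fun a => χ (N a)
      map_add' := by intro x y; simp
      map_smul' := by intro c x; simp }
    ‖χ‖ (fun x => (χ.le_opNorm _).trans (by
      gcongr; exact NonUnitalStarAlgHom.norm_apply_le N x))

@[simp] theorem pb_apply {A B : Type*} [CStarAlgebra A] [CStarAlgebra B] (N : A →⋆ₐ[ℂ] B)
    (χ : B →L[ℂ] ℂ) (a : A) : pb N χ a = χ (N a) := rfl

theorem St.pb {A B : Type*} [CStarAlgebra A] [CStarAlgebra B] (N : A →⋆ₐ[ℂ] B)
    {χ : B →L[ℂ] ℂ} (h : St χ) : St (pb N χ) :=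
  ⟨by rw [pb_apply, map_one, h.1], fun a =>
    (h.2 _).trans (NonUnitalStarAlgHom.norm_apply_le N a)⟩

variable {q : Linf G →L[ℂ] ℂ} {L : Set (Linf G →L[ℂ] ℂ)}

theorem K_one (H : Good q L) (a : GAct G B) (N : Linf G →⋆ₐ[ℂ] B)
    (hcov : ∀ f g, a.α g⁻¹ (N ((ltr G).Phi q f)) = N ((ltr G).Phi q ((ltr G).α g⁻¹ f)))
    {χ : B →L[ℂ] ℂ} (hχ : St χ) (f : Linf G) :
    a.conv q χ (N ((ltr G).Phi q f)) = q f := by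
  have h1 : a.Phi χ (N ((ltr G).Phi q f)) = (ltr G).Phi ((ltr G).conv (pb N χ) q) f := by
    ext g
    rw [GAct.Phi_apply, hcov]; rfl
  rw [GAct.conv_apply, h1, ← GAct.conv_apply, H.rig _ (H.conv_mem _ (hχ.pb N) _ H.q_mem)]

theorem K_main (H : Good q L) (a : GAct G B) (ha : ∀ g, a.α g 1 = 1) (N : Linf G →⋆ₐ[ℂ] B)
    (hcov : ∀ f g, a.α g⁻¹ (N ((ltr G).Phi q f)) = N ((ltr G).Phi q ((ltr G).α g⁻¹ f)))
    {χ : B →L[ℂ] ℂ} (hχ : St χ) (f : Linf G) (T : B) :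
    a.conv q χ (N ((ltr G).Phi q f) * T) = q f * a.conv q χ T ∧
    a.conv q χ (T * N ((ltr G).Phi q f)) = q f * a.conv q χ T := by
  have hst : St (a.conv q χ) := St.conv a ha H.qst hχ
  have h1 := K_one H a N hcov hχ
  set ψ := a.conv q χ with hψ
  have hw : (ltr G).conv (pb N ψ) q = q := by
    ext f; rw [GAct.conv_apply, pb_apply, h1]
  have h2 := H.mul (hst.pb N) hw (star ((ltr G).Phi q f)) f
  rw [pb_apply, pb_apply, map_mul, map_star, pos_star hst.nonneg, h1] at h2
  set x := N ((ltr G).Phi q f) with hx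
  have hcomm : star x * x = x * star x := by
    rw [hx, ← map_star, ← map_mul, ← map_mul, mul_comm]
  set y := x - (q f) • (1 : B) with hy
  have hyy : star y * y = star x * x - (q f) • star x - (star (q f)) • x + (star (q f) * q f) • (1 : B) := by
    rw [hy, star_sub, star_smul, star_one, sub_mul, mul_sub, mul_sub]
    simp only [smul_mul_assoc, mul_smul_comm, one_mul, mul_one, smul_smul]
    rw [mul_comm (q f)]
    abel
  have hyy' : y * star y = star y * y := by
    rw [hyy, hcomm]
    rw [hy, star_sub, star_smul, star_one, sub_mul, mul_sub, mul_sub]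
    simp only [smul_mul_assoc, mul_smul_comm, one_mul, mul_one, smul_smul]
    abel
  have hz : ψ (star y * y) = 0 := by
    rw [hyy, map_add, map_sub, map_sub, _root_.map_smul, _root_.map_smul, _root_.map_smul, h2,
      pos_star hst.nonneg, h1, hst.1]
    simp only [smul_eq_mul]; ring
  have hxy : x = y + (q f) • (1 : B) := by rw [hy]; simp
  constructor
  · rw [hxy, add_mul, smul_mul_assoc, one_mul, map_add, pos_cs' hst.nonneg (by rw [hyy', hz]),
      zero_add, _root_.map_smul, smul_eq_mul]
  · rw [hxy, mul_add, mul_smul_comm, mul_one, map_add, pos_cs hst.nonneg hz,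
      zero_add, _root_.map_smul, smul_eq_mul]

end K


section Ops

variable {Y : Type*}

/-- Bounded operators on `ℓ²(Y)`. -/
abbrev BO (Y : Type*) := ℓ²(Y, ℂ) →L[ℂ] ℓ²(Y, ℂ)

theorem mulv_le (d : Linf Y) (ξ : ℓ²(Y, ℂ)) (y : Y) : ‖d y * ξ y‖ ≤ ‖(((‖d‖ : ℝ) : ℂ) • ξ : ℓ²(Y, ℂ)) y‖ := by
  change _ ≤ ‖((‖d‖ : ℝ) : ℂ) * ξ y‖
  rw [norm_mul, norm_mul, Complex.norm_real, norm_norm]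
  gcongr
  exact Linf.apply_le d y

/-- Pointwise multiplication. -/
def mulv (d : Linf Y) (ξ : ℓ²(Y, ℂ)) : ℓ²(Y, ℂ) :=
  ⟨fun y => d y * ξ y, (lp.memℓp (((‖d‖ : ℝ) : ℂ) • ξ : ℓ²(Y, ℂ))).mono' (mulv_le d ξ)⟩

@[simp] theorem mulv_apply (d : Linf Y) (ξ : ℓ²(Y, ℂ)) (y : Y) : mulv d ξ y = d y * ξ y := rfl

/-- Multiplication operator. -/
def mulL (d : Linf Y) : BO Y :=
  LinearMap.mkContinuous
    { toFun := mulv d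
      map_add' := by
        intro ξ η; ext y
        change d y * (ξ y + η y) = d y * ξ y + d y * η y
        ring
      map_smul' := by
        intro c ξ; ext y
        change d y * (c * ξ y) = c * (d y * ξ y)
        ring }
    ‖d‖ (fun ξ => by
      refine (lp.norm_mono (by norm_num) (x := mulv d ξ) (y := (((‖d‖ : ℝ) : ℂ) • ξ : ℓ²(Y, ℂ))) (mulv_le d ξ)).trans ?_
      rw [norm_smul, Complex.norm_real, norm_norm])

@[simp] theorem mulL_apply (d : Linf Y) (ξ : ℓ²(Y, ℂ)) (y : Y) : mulL d ξ y = d y * ξ y := rfl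

theorem BO.star_eq {S T : BO Y} (h : ∀ ξ η, inner ℂ (S ξ) η = inner ℂ ξ (T η)) : star T = S := by
  rw [ContinuousLinearMap.star_eq_adjoint]
  symm
  rw [ContinuousLinearMap.eq_adjoint_iff]
  exact h

theorem mulL_star (d : Linf Y) : mulL (star d) = star (mulL d) := by
  symm
  apply BO.star_eq
  intro ξ η
  rw [lp.inner_eq_tsum, lp.inner_eq_tsum]
  congr 1
  ext y
  rw [mulL_apply, mulL_apply, Linf.star_apply]
  simp [RCLike.inner_apply]
  ring

/-- The representation of `ℓ^∞(Y)` by multiplication operators. -/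
def mulH (Y : Type*) : Linf Y →⋆ₐ[ℂ] BO Y where
  toFun := mulL
  map_one' := by ext ξ y; simp
  map_mul' d e := by ext ξ y; simp [mul_assoc]
  map_zero' := by
    ext ξ y
    change (0 : ℂ) * ξ y = 0
    simp
  map_add' d e := by
    ext ξ y
    change (d y + e y) * ξ y = d y * ξ y + e y * ξ y
    ring
  commutes' c := by
    rw [Algebra.algebraMap_eq_smul_one, Algebra.algebraMap_eq_smul_one]
    ext ξ y
    change (c * 1) * ξ y = c * ξ y
    simp
  map_star' := mulL_star

@[simp] theorem mulH_apply (d : Linf Y) (ξ : ℓ²(Y, ℂ)) (y : Y) : mulH Y d ξ y = d y * ξ y := rfl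

/-- Pull back bounded functions. -/
def pull {X Y : Type*} (σ : Y → X) : Linf X →⋆ₐ[ℂ] Linf Y where
  toFun f := Linf.mk (fun y => f (σ y)) ‖f‖ (fun y => Linf.apply_le f _)
  map_one' := by ext y; simp
  map_mul' d e := by ext y; simp
  map_zero' := by ext y; rfl
  map_add' d e := by ext y; rfl
  commutes' c := by ext y; rfl
  map_star' d := by ext y; rfl

@[simp] theorem pull_apply {X Y : Type*} (σ : Y → X) (f : Linf X) (y : Y) : pull σ f y = f (σ y) := rfl

variable {G : Type*} [Group G] [MulAction G Y]

theorem prm_mem (g : G) (f : ℓ²(Y, ℂ)) : Memℓp (fun h => f (g⁻¹ • h)) 2 := by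
  have hf : Summable fun i : Y => ‖f i‖ ^ (2 : ℝ≥0∞).toReal :=
    (memℓp_gen_iff (by norm_num)).1 (lp.memℓp f)
  have h2 : Summable ((fun i : Y => ‖f i‖ ^ (2 : ℝ≥0∞).toReal) ∘ (MulAction.toPerm g⁻¹ : Equiv.Perm Y)) :=
    (Equiv.summable_iff _).2 hf
  exact memℓp_gen h2

theorem prm_norm (g : G) (f : ℓ²(Y, ℂ)) : ‖(⟨_, prm_mem g f⟩ : ℓ²(Y, ℂ))‖ = ‖f‖ := by
  rw [lp.norm_eq_tsum_rpow (by norm_num) f, lp.norm_eq_tsum_rpow (by norm_num)]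
  congr 1
  exact (MulAction.toPerm g⁻¹).tsum_eq (fun h => ‖f h‖ ^ (2 : ℝ≥0∞).toReal)

/-- Permutation representation. -/
def prm (Y : Type*) [MulAction G Y] (g : G) : BO Y :=
  LinearMap.mkContinuous
    { toFun := fun f => ⟨_, prm_mem g f⟩
      map_add' := by intro ξ η; ext y; rfl
      map_smul' := by intro ξ η; ext y; rfl }
    1 (fun ξ => by rw [one_mul]; exact (prm_norm g ξ).le)

@[simp] theorem prm_apply (g : G) (ξ : ℓ²(Y, ℂ)) (y : Y) : prm Y g ξ y = ξ (g⁻¹ • y) := rfl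

theorem prm_norm_apply (g : G) (ξ : ℓ²(Y, ℂ)) : ‖prm Y g ξ‖ = ‖ξ‖ := prm_norm g ξ

theorem prm_norm_le (g : G) : ‖prm Y g‖ ≤ 1 :=
  ContinuousLinearMap.opNorm_le_bound _ zero_le_one (fun ξ => by
    rw [prm_norm_apply, one_mul])

theorem prm_mul (g h : G) : prm Y (g * h) = prm Y g * prm Y h := by
  ext ξ y
  simp [mul_smul]

theorem prm_one : prm Y (1 : G) = 1 := by
  ext ξ y
  simp

theorem prm_mul_inv (g : G) : prm Y g * prm Y g⁻¹ = 1 := by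
  rw [← prm_mul, mul_inv_cancel, prm_one]

theorem prm_inv_mul (g : G) : prm Y g⁻¹ * prm Y g = 1 := by
  rw [← prm_mul, inv_mul_cancel, prm_one]

theorem prm_star (g : G) : star (prm Y g) = prm Y g⁻¹ := by
  apply BO.star_eq
  intro ξ η
  rw [lp.inner_eq_tsum, lp.inner_eq_tsum, ← (MulAction.toPerm g⁻¹).tsum_eq]
  simp

/-- Conjugation action. -/
def cj (G Y : Type*) [Group G] [MulAction G Y] : GAct G (BO Y) where
  α g := LinearMap.mkContinuous
    { toFun := fun T => prm Y g * T * prm Y g⁻¹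
      map_add' := by intro S T; rw [mul_add, add_mul]
      map_smul' := by intro c T; rw [mul_smul_comm, smul_mul_assoc]; rfl }
    1 (fun T => by
      refine (norm_mul_le _ _).trans ?_
      rw [mul_comm]
      refine mul_le_mul (prm_norm_le _) ((norm_mul_le _ _).trans ?_) (norm_nonneg _) zero_le_one
      exact mul_le_of_le_one_left (norm_nonneg _) (prm_norm_le _))
  norm_le g T := by
    refine (norm_mul_le (prm Y g * T) (prm Y g⁻¹)).trans ?_
    refine (mul_le_of_le_one_right (norm_nonneg _) (prm_norm_le _)).trans ?_
    refine (norm_mul_le _ _).trans ?_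
    exact mul_le_of_le_one_left (norm_nonneg _) (prm_norm_le _)
  mul g h T := by
    change prm Y (g * h) * T * prm Y (g * h)⁻¹ = prm Y g * (prm Y h * T * prm Y h⁻¹) * prm Y g⁻¹
    rw [mul_inv_rev, prm_mul, prm_mul]
    simp only [mul_assoc]
  one T := by
    change prm Y (1 : G) * T * prm Y (1 : G)⁻¹ = T
    rw [inv_one, prm_one, mul_one, one_mul]

@[simp] theorem cj_apply (g : G) (T : BO Y) : (cj G Y).α g T = prm Y g * T * prm Y g⁻¹ := rfl

theorem cj_one (g : G) : (cj G Y).α g 1 = 1 := by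
  rw [cj_apply, mul_one, prm_mul_inv]

variable {q : Linf G →L[ℂ] ℂ} {L : Set (Linf G →L[ℂ] ℂ)}

/-- Covariance. -/
theorem cov (σ : Y → G) (hσ : ∀ f g y, (ltr G).Phi q f (σ (g • y)) = (ltr G).Phi q f (g * σ y))
    (f : Linf G) (g : G) :
    (cj G Y).α g⁻¹ (((mulH Y).comp (pull σ)) ((ltr G).Phi q f)) =
      ((mulH Y).comp (pull σ)) ((ltr G).Phi q ((ltr G).α g⁻¹ f)) := by
  have e : ((mulH Y).comp (pull σ)) ((ltr G).Phi q ((ltr G).α g⁻¹ f)) * prm Y g⁻¹ =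
      prm Y g⁻¹ * ((mulH Y).comp (pull σ)) ((ltr G).Phi q f) := by
    ext ξ y
    change (ltr G).Phi q ((ltr G).α g⁻¹ f) (σ y) * ξ (g⁻¹⁻¹ • y) =
      (ltr G).Phi q f (σ (g⁻¹⁻¹ • y)) * ξ (g⁻¹⁻¹ • y)
    rw [hσ]
    simp only [GAct.Phi_apply, ← GAct.mul]
    simp
  rw [cj_apply, ← e, mul_assoc, prm_mul_inv, mul_one]

end Ops


section Red

variable {G : Type u} [Group G]

theorem redCstar_closed : IsClosed ((redCstar G : StarSubalgebra ℂ (BO G)) : Set (BO G)) := by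
  rw [redCstar]
  exact StarSubalgebra.isClosed_topologicalClosure _

theorem redCstar_eq : redCstar G = (StarAlgebra.adjoin ℂ (Set.range (lreg (G := G)))).topologicalClosure := by
  rw [redCstar]

theorem lreg_eq (g : G) : lreg g = prm G g := by
  ext ξ h
  rw [lreg, lregE]
  rfl

theorem uu_coe (g : G) : ((uu g : redCstar G) : BO G) = prm G g := by
  rw [uu, ← lreg_eq]

theorem uu_mul (g h : G) : uu (g * h) = uu g * uu h := by
  apply Subtype.ext
  rw [uu_coe, MulMemClass.coe_mul, uu_coe, uu_coe, prm_mul]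

theorem uu_one : uu (1 : G) = 1 := by
  apply Subtype.ext
  rw [uu_coe, prm_one]; rfl

theorem uu_star (g : G) : star (uu g) = uu g⁻¹ := by
  apply Subtype.ext
  rw [uu_coe]
  change star ((uu g : redCstar G) : BO G) = _
  rw [uu_coe, prm_star]

theorem star_span {x : BO G} (hx : x ∈ Submodule.span ℂ (Set.range (prm (G := G) G))) :
    star x ∈ Submodule.span ℂ (Set.range (prm (G := G) G)) := by
  induction hx using Submodule.span_induction with
  | mem x h =>
    obtain ⟨g, rfl⟩ := h
    rw [prm_star]
    exact Submodule.subset_span ⟨g⁻¹, rfl⟩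
  | zero => rw [star_zero]; exact Submodule.zero_mem _
  | add x y _ _ hx hy => rw [star_add]; exact Submodule.add_mem _ hx hy
  | smul c x _ hx => rw [star_smul]; exact Submodule.smul_mem _ _ hx

theorem adjoin_le_span {a : BO G} (ha : a ∈ StarAlgebra.adjoin ℂ (Set.range (lreg (G := G)))) :
    a ∈ Submodule.span ℂ (Set.range (prm (G := G) G)) := by
  induction ha using StarAlgebra.adjoin_induction with
  | mem x h =>
    obtain ⟨g, rfl⟩ := h
    exact Submodule.subset_span ⟨g, (lreg_eq g).symm⟩
  | algebraMap r =>
    rw [Algebra.algebraMap_eq_smul_one, ← prm_one (G := G)]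
    exact Submodule.smul_mem _ _ (Submodule.subset_span ⟨1, rfl⟩)
  | add x y _ _ hx hy => exact Submodule.add_mem _ hx hy
  | mul x y _ _ hx hy =>
    have := Submodule.mul_mem_mul hx hy
    rw [Submodule.span_mul_span] at this
    refine Submodule.span_mono ?_ this
    rintro _ ⟨_, ⟨g, rfl⟩, _, ⟨h, rfl⟩, rfl⟩
    exact ⟨g * h, prm_mul g h⟩
  | star x _ hx =>
    exact star_span hx

theorem red_approx (a : redCstar G) {ε : ℝ} (hε : 0 < ε) :
    ∃ s ∈ Submodule.span ℂ (Set.range (uu (G := G))), ‖a - s‖ < ε := by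
  have h1 : (a : BO G) ∈ closure ((Submodule.span ℂ (Set.range (prm (G := G) G))) : Set (BO G)) := by
    have h2 : (a : BO G) ∈ (StarAlgebra.adjoin ℂ (Set.range (lreg (G := G)))).topologicalClosure := by
      rw [← redCstar_eq]
      exact a.2
    have h3 : (a : BO G) ∈ closure ((StarAlgebra.adjoin ℂ (Set.range (lreg (G := G)))) : Set (BO G)) := h2
    exact closure_mono (fun x hx => adjoin_le_span hx) h3
  obtain ⟨w, hw, hd⟩ := Metric.mem_closure_iff.1 h1 ε hε
  have h4 : w ∈ (Submodule.span ℂ (Set.range (uu (G := G)))).map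
      ((redCstar G).subtype.toAlgHom.toLinearMap) := by
    rw [Submodule.map_span]
    refine Submodule.span_mono ?_ hw
    rintro _ ⟨g, rfl⟩
    exact ⟨uu g, ⟨g, rfl⟩, uu_coe g⟩
  obtain ⟨s, hs, rfl⟩ := h4
  refine ⟨s, hs, ?_⟩
  rw [dist_eq_norm] at hd
  exact hd

theorem red_ext {F : Type*} [NormedAddCommGroup F] [NormedSpace ℂ F] (f g : redCstar G →L[ℂ] F)
    (h : ∀ s, f (uu s) = g (uu s)) : f = g := by
  have hd : Dense ((Submodule.span ℂ (Set.range (uu (G := G)))) : Set (redCstar G)) := by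
    intro a
    rw [Metric.mem_closure_iff]
    intro ε hε
    obtain ⟨s, hs, h⟩ := red_approx a hε
    exact ⟨s, hs, by rw [dist_eq_norm]; exact h⟩
  apply ContinuousLinearMap.coeFn_injective
  refine Continuous.ext_on hd f.continuous g.continuous ?_
  intro x hx
  induction hx using Submodule.span_induction with
  | mem x hx => obtain ⟨s, rfl⟩ := hx; exact h s
  | zero => simp
  | add x y _ _ hx hy => simp [hx, hy]
  | smul c x _ hx => simp [hx]

theorem tau_apply (a : redCstar G) :
    tau G a = inner ℂ (deltaOne (G := G)) ((a : BO G) (deltaOne (G := G))) := by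
  rw [tau]; rfl

open Classical in
theorem deltaOne_eq : deltaOne (G := G) = lp.single 2 (1 : G) 1 := by
  rw [deltaOne]

open Classical in
theorem prm_single {Y : Type*} [MulAction G Y] (g : G) (y : Y) :
    prm Y g (lp.single 2 y (1 : ℂ)) = lp.single 2 (g • y) (1 : ℂ) := by
  ext z
  rw [prm_apply, lp.coeFn_single, lp.coeFn_single, Pi.single_apply, Pi.single_apply]
  simp [inv_smul_eq_iff]

open Classical in
theorem tau_uu (g : G) : tau G (uu g) = if g = 1 then 1 else 0 := by
  rw [tau_apply, uu_coe, deltaOne_eq, prm_single, lp.inner_single_left, lp.coeFn_single,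
    Pi.single_apply]
  simp [eq_comm]

theorem exists_state_of_ideal {A : Type*} [CStarAlgebra A] (I : TwoSidedIdeal A)
    (hcl : IsClosed (I : Set A)) (hne : I ≠ ⊤) : ∃ φ : A →L[ℂ] ℂ, St φ ∧ ∀ x ∈ I, φ x = 0 := by
  have h1 : ∀ x ∈ I, 1 ≤ ‖1 - x‖ := by
    intro x hx
    by_contra hlt
    push Not at hlt
    obtain ⟨v, hv⟩ : IsUnit x := by
      have := (Units.oneSub (1 - x) hlt).isUnit
      simpa using this
    apply hne
    rw [← TwoSidedIdeal.one_mem_iff]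
    have := I.mul_mem_left (↑v⁻¹) x hx
    rwa [← hv, Units.inv_mul] at this
  let S : Submodule ℂ A :=
    { carrier := I
      add_mem' := fun hx hy => I.add_mem hx hy
      zero_mem' := I.zero_mem
      smul_mem' := fun c x hx => by
        have := I.mul_mem_left (c • 1) x hx
        rwa [smul_mul_assoc, one_mul] at this }
  haveI : IsClosed (S : Set A) := hcl
  have hn1 : 1 ≤ ‖(Submodule.Quotient.mk 1 : A ⧸ S)‖ := by
    by_contra hlt
    push Not at hlt
    obtain ⟨m, hm, hm2⟩ := Submodule.Quotient.norm_mk_lt (S := S) (Submodule.Quotient.mk 1)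
      (sub_pos.2 hlt)
    rw [Submodule.Quotient.eq] at hm
    have h2 := h1 (1 - m) (by
      have := I.neg_mem hm
      rwa [neg_sub] at this)
    rw [sub_sub_cancel] at h2
    linarith
  have hle : ∀ a : A, ‖(Submodule.Quotient.mk a : A ⧸ S)‖ ≤ ‖a‖ := fun a =>
    Submodule.Quotient.norm_mk_le S a
  have hA : ‖(1 : A)‖ ≤ 1 := by
    have h := CStarRing.norm_self_mul_star (x := (1 : A))
    rw [star_one, mul_one] at h
    nlinarith [norm_nonneg (1 : A)]
  have hn : ‖(Submodule.Quotient.mk 1 : A ⧸ S)‖ = 1 := le_antisymm ((hle 1).trans hA) hn1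
  obtain ⟨g, hg1, hg2⟩ := exists_dual_vector ℂ (Submodule.Quotient.mk 1 : A ⧸ S) (by rw [hn]; norm_num)
  refine ⟨g.comp (LinearMap.mkContinuous S.mkQ 1 (fun a => by rw [one_mul]; exact hle a)), ⟨?_, ?_⟩, ?_⟩
  · change g (Submodule.Quotient.mk 1) = 1
    rw [hg2, hn]; simp
  · intro a
    change ‖g (Submodule.Quotient.mk a)‖ ≤ ‖a‖
    refine (g.le_opNorm _).trans ?_
    rw [hg1, one_mul]; exact hle a
  · intro x hx
    change g (Submodule.Quotient.mk x) = 0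
    rw [(Submodule.Quotient.mk_eq_zero S).2 hx, map_zero]

theorem red_state_of_ideal (I : TwoSidedIdeal (redCstar G)) (hI : IsClosed (I : Set (redCstar G)))
    (hne : I ≠ ⊤) : ∃ φ : WeakDual ℂ (redCstar G), IsState φ ∧ ∀ x ∈ I, φ x = 0 := by
  haveI := redCstar_closed (G := G)
  obtain ⟨φ, hφ, hφI⟩ := exists_state_of_ideal I hI hne
  exact ⟨φ, ⟨hφ.1, hφ.nonneg⟩, hφI⟩

theorem state_norm (φ : WeakDual ℂ (redCstar G)) (h : IsState φ) (a : redCstar G) :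
    ‖φ a‖ ≤ ‖a‖ := by
  haveI := redCstar_closed (G := G)
  exact (pos_St (χ := φ) h.1 h.2).2 a

theorem hz1 {E : Type*} [AddCommMonoid E] [Module ℂ E] [TopologicalSpace E]
    (S : Set (WeakDual ℂ E)) (x : E) (hS : ∀ ψ ∈ S, ψ x = 0) 
     (hcv : Convex ℝ {ψ : WeakDual ℂ E | ψ x = 0}) : convexHull ℝ S ⊆ {ψ : WeakDual ℂ E | ψ x = 0} := by
  apply convexHull_min
  · intro s hs; exact hS s hs
  · exact hcv
theorem hz2 {E : Type*} [AddCommMonoid E] [Module ℂ E] [TopologicalSpace E]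
    (x : E) : Convex ℝ {ψ : WeakDual ℂ E | ψ x = 0} := by
  intro ψ hψ θ hθ s t hs ht hst
  have : (s • ψ + t • θ) x = s • ψ x + t • θ x := rfl
  rw [Set.mem_setOf_eq] at *
  rw [this, hψ, hθ]; simp
theorem hz3 {E : Type*} [AddCommMonoid E] [Module ℂ E] [TopologicalSpace E]
    (x : E) : IsClosed {ψ : WeakDual ℂ E | ψ x = 0} := 
   isClosed_eq (WeakDual.eval_continuous x) continuous_const

theorem closure_hull_zero {E : Type*} [AddCommMonoid E] [Module ℂ E] [TopologicalSpace E]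
    (S : Set (WeakDual ℂ E)) (x : E) (hS : ∀ ψ ∈ S, ψ x = 0) {τ : WeakDual ℂ E}
    (ht : τ ∈ closure (convexHull ℝ S)) : τ x = 0 := by
  have h1 := closure_minimal (hz1 S x hS (hz2 x)) (hz3 x)
  exact h1 ht

open Classical in
theorem backward
    (h : ∀ φ : WeakDual ℂ (redCstar G), IsState φ →
        tau G ∈ closure (convexHull ℝ {ψ : WeakDual ℂ (redCstar G) | ∃ g : G, ψ = dualAct g φ})) :
    IsCstarSimple G := by
  intro I hI
  by_cases htop : I = ⊤
  · exact Or.inr htop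
  left
  obtain ⟨φ, hφ, hφI⟩ := red_state_of_ideal I hI htop
  have hτ : ∀ x ∈ I, tau G x = 0 := by
    intro x hx
    refine closure_hull_zero _ x ?_ (h φ hφ)
    rintro _ ⟨g, rfl⟩
    exact hφI _ (I.mul_mem_right _ _ (I.mul_mem_left _ _ hx))
  rw [eq_bot_iff]
  intro x hx
  rw [TwoSidedIdeal.mem_bot]
  apply Subtype.ext
  apply lp.ext_continuousLinearMap (by norm_num : (2 : ℝ≥0∞) ≠ ⊤)
  intro g
  ext1
  have h1 := hτ (star (uu g) * (star x * x) * uu g)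
    (I.mul_mem_right _ _ (I.mul_mem_left _ _ (I.mul_mem_left _ _ hx)))
  have h2 : star (uu g) * (star x * x) * uu g = star (x * uu g) * (x * uu g) := by
    rw [star_mul]; simp only [mul_assoc]
  rw [h2, tau_apply] at h1
  have h3 : ((star (x * uu g) * (x * uu g) : redCstar G) : BO G) =
    star ((x : BO G) * prm G g) * ((x : BO G) * prm G g) := by
    rw [← uu_coe]; rfl
  rw [h3, ContinuousLinearMap.mul_apply, ContinuousLinearMap.star_eq_adjoint,
    ContinuousLinearMap.adjoint_inner_right, inner_self_eq_zero, deltaOne_eq,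
    ContinuousLinearMap.mul_apply, prm_single] at h1
  simp at h1
  simp
  convert h1

theorem conclude (φ : WeakDual ℂ (redCstar G)) {q : Linf G →L[ℂ] ℂ} (hq : St q)
    (F : redCstar G → Linf G) (hF : ∀ a g, F a g = dualAct g φ a) (h : ∀ a, tau G a = q (F a)) :
    tau G ∈ closure (convexHull ℝ {ψ : WeakDual ℂ (redCstar G) | ∃ g : G, ψ = dualAct g φ}) := by
  by_contra hn
  haveI : LocallyConvexSpace ℝ (WeakDual ℂ (redCstar G)) :=
    inferInstanceAs (LocallyConvexSpace ℝ (WeakBilin (topDualPairing ℂ (redCstar G))))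
  haveI : IsScalarTower ℝ ℂ (WeakDual ℂ (redCstar G)) :=
    inferInstanceAs (IsScalarTower ℝ ℂ (redCstar G →L[ℂ] ℂ))
  obtain ⟨f, r, hf, hr⟩ := RCLike.geometric_hahn_banach_closed_point (𝕜 := ℂ)
    (convex_convexHull ℝ _).closure isClosed_closure hn
  obtain ⟨a, ha⟩ := LinearMap.dualEmbedding_surjective (topDualPairing ℂ (redCstar G)) f
  have hfa : ∀ ψ, f ψ = ψ a := fun ψ => by rw [← ha]; rfl
  have h1 : ∀ g, (F a g).re < r := by
    intro g
    rw [hF, ← hfa]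
    exact hf _ (subset_closure (subset_convexHull ℝ _ ⟨g, rfl⟩))
  rw [hfa, h] at hr
  have h2 : 0 ≤ q ((r : ℂ) • 1 - (1/2 : ℂ) • (F a + star (F a))) := by
    apply hq.nonneg_of
    intro g
    change 0 ≤ (r : ℂ) * 1 - (1/2 : ℂ) * (F a g + star (F a g))
    rw [Complex.nonneg_iff]
    constructor
    · simp; linarith [h1 g]
    · simp
  rw [map_sub, _root_.map_smul, _root_.map_smul, map_add, pos_star hq.nonneg, hq.1,
    Complex.nonneg_iff] at h2
  have := h2.1
  simp at this
  simp at hr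
  linarith

end Red


section Day

variable {Γ : Type*} [Group Γ]

open Classical in
/-- A Day difference. -/
def dayX (E : Finset Γ) (h : Γ) : E → lp (fun _ : Γ => ℝ) 1 :=
  fun k => lp.single 1 (k.1 * h) (1 : ℝ) - lp.single 1 h (1 : ℝ)

/-- The convex set of differences of probability vectors. -/
def dayC (E : Finset Γ) : Set (E → lp (fun _ : Γ => ℝ) 1) :=
  {y | ∃ p : Γ → ℝ, (∀ g, 0 ≤ p g) ∧ HasSum p 1 ∧ ∀ k g, y k g = p (k.1⁻¹ * g) - p g}

theorem dayC_convex (E : Finset Γ) : Convex ℝ (dayC E) := by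
  rintro y ⟨p, hp, hp1, hpy⟩ z ⟨r, hr, hr1, hrz⟩ s t hs ht hst
  refine ⟨fun g => s * p g + t * r g, fun g => add_nonneg (mul_nonneg hs (hp g)) (mul_nonneg ht (hr g)),
    ?_, ?_⟩
  · have := (hp1.mul_left s).add (hr1.mul_left t)
    rwa [mul_one, mul_one, hst] at this
  · intro k g
    change s * y k g + t * z k g = _
    rw [hpy, hrz]; ring

theorem dayX_mem (E : Finset Γ) (h : Γ) : dayX E h ∈ dayC E := by
  classical
  refine ⟨fun g => if g = h then 1 else 0, fun g => by dsimp only; split_ifs <;> norm_num, hasSum_ite_eq h 1, ?_⟩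
  intro k g
  change (lp.single 1 (k.1 * h) (1 : ℝ) : lp (fun _ : Γ => ℝ) 1) g -
    (lp.single 1 h (1 : ℝ) : lp (fun _ : Γ => ℝ) 1) g = _
  rw [lp.coeFn_single, lp.coeFn_single, Pi.single_apply, Pi.single_apply]
  simp only [inv_mul_eq_iff_eq_mul]

theorem day_zero_mem {m : Linf Γ →L[ℂ] ℂ} (hm : St m) (hinv : ∀ k u, m ((ltr Γ).α k u) = m u)
    (E : Finset Γ) : (0 : E → lp (fun _ : Γ => ℝ) 1) ∈ closure (convexHull ℝ (Set.range (dayX E))) := by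
  classical
  by_contra hn
  obtain ⟨Λ, r, hr, hΛ⟩ := geometric_hahn_banach_point_closed
    (convex_convexHull ℝ _).closure isClosed_closure hn
  rw [map_zero] at hr
  let v : E → Γ → ℝ := fun k h => Λ (Pi.single k (lp.single 1 h (1 : ℝ)))
  have hv : ∀ k h, ‖((v k h : ℝ) : ℂ)‖ ≤ ‖Λ‖ := by
    intro k h
    rw [Complex.norm_real]
    refine (Λ.le_opNorm _).trans ?_
    rw [Pi.norm_single, lp.norm_single (by norm_num)]
    simp
  let V : E → Linf Γ := fun k => Linf.mk (fun h => ((v k h : ℝ) : ℂ)) ‖Λ‖ (hv k)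
  have hx : ∀ h, Λ (dayX E h) = ∑ k, (v k (k.1 * h) - v k h) := by
    intro h
    conv_lhs => rw [← Finset.univ_sum_single (dayX E h), map_sum]
    refine Finset.sum_congr rfl (fun k _ => ?_)
    change Λ (Pi.single k (lp.single 1 (k.1 * h) (1 : ℝ) - lp.single 1 h (1 : ℝ))) = _
    rw [Pi.single_sub, map_sub]
  have hpos : ∀ h, r < ∑ k, (v k (k.1 * h) - v k h) := by
    intro h
    rw [← hx]
    exact hΛ _ (subset_closure (subset_convexHull ℝ _ ⟨h, rfl⟩))
  let W : Linf Γ := ∑ k, ((ltr Γ).α k.1⁻¹ (V k) - V k)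
  have hW : m W = 0 := by
    simp only [W, map_sum, map_sub, hinv, sub_self, Finset.sum_const_zero]
  have hWx : ∀ h, W h = ((∑ k, (v k (k.1 * h) - v k h) : ℝ) : ℂ) := by
    intro h
    simp only [W]
    rw [lp.coeFn_sum, Finset.sum_apply, Complex.ofReal_sum]
    refine Finset.sum_congr rfl (fun k _ => ?_)
    change ((v k (k.1⁻¹⁻¹ * h) : ℝ) : ℂ) - ((v k h : ℝ) : ℂ) = _
    rw [inv_inv]; push_cast; rfl
  have h2 : 0 ≤ m (W - (r : ℂ) • 1) := by
    apply hm.nonneg_of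
    intro h
    change 0 ≤ W h - (r : ℂ) * 1
    rw [hWx, mul_one, ← Complex.ofReal_sub]
    exact Complex.zero_le_real.2 (sub_nonneg.2 (hpos h).le)
  rw [map_sub, _root_.map_smul, hW, hm.1, Complex.nonneg_iff] at h2
  have := h2.1
  simp at this
  linarith

theorem sqrt_sub_sq {a b : ℝ} (ha : 0 ≤ a) (hb : 0 ≤ b) : |√a - √b| ^ 2 ≤ |a - b| := by
  have h1 : a - b = (√a - √b) * (√a + √b) := by
    nlinarith [Real.mul_self_sqrt ha, Real.mul_self_sqrt hb]
  rw [h1, abs_mul, sq]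
  refine mul_le_mul_of_nonneg_left ?_ (abs_nonneg _)
  rw [abs_of_nonneg (add_nonneg (Real.sqrt_nonneg a) (Real.sqrt_nonneg b)), abs_le]
  constructor <;> linarith [Real.sqrt_nonneg a, Real.sqrt_nonneg b]

theorem day_vec {m : Linf Γ →L[ℂ] ℂ} (hm : St m) (hinv : ∀ k u, m ((ltr Γ).α k u) = m u)
    (E : Finset Γ) {ε : ℝ} (hε : 0 < ε) :
    ∃ ξ : ℓ²(Γ, ℂ), ‖ξ‖ = 1 ∧ ∀ k ∈ E, ‖prm Γ k ξ - ξ‖ ^ 2 < ε := by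
  obtain ⟨y, hy, hy2⟩ := Metric.mem_closure_iff.1 (day_zero_mem hm hinv E) ε hε
  obtain ⟨p, hp, hp1, hpy⟩ := convexHull_min (by rintro _ ⟨h, rfl⟩; exact dayX_mem E h) (dayC_convex E) hy
  have two : (2 : ℝ≥0∞).toReal = ((2 : ℕ) : ℝ) := by norm_num
  have hsq : ∀ g, ‖((√(p g) : ℝ) : ℂ)‖ ^ (2 : ℝ≥0∞).toReal = p g := by
    intro g
    rw [two, Real.rpow_natCast, Complex.norm_real, Real.norm_of_nonneg (Real.sqrt_nonneg _),
      Real.sq_sqrt (hp g)]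
  let ξ : ℓ²(Γ, ℂ) := ⟨fun g => ((√(p g) : ℝ) : ℂ), memℓp_gen (by simp_rw [hsq]; exact hp1.summable)⟩
  refine ⟨ξ, ?_, ?_⟩
  · rw [lp.norm_eq_tsum_rpow (by norm_num)]
    have : ∀ g, ‖ξ g‖ ^ (2 : ℝ≥0∞).toReal = p g := hsq
    simp_rw [this, hp1.tsum_eq]
    simp
  · intro k hk
    have h1 : ‖prm Γ k ξ - ξ‖ ^ 2 = ∑' g, ‖(prm Γ k ξ - ξ : ℓ²(Γ, ℂ)) g‖ ^ (2 : ℝ≥0∞).toReal := by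
      rw [← lp.norm_rpow_eq_tsum (by norm_num), two, Real.rpow_natCast]
    have h2 : ‖y ⟨k, hk⟩‖ = ∑' g, ‖y ⟨k, hk⟩ g‖ := by
      rw [lp.norm_eq_tsum_rpow (by norm_num)]
      simp
    have hs : Summable fun g => ‖y ⟨k, hk⟩ g‖ := by
      have := (lp.memℓp (y ⟨k, hk⟩)).summable (by norm_num)
      simpa using this
    have hle : ∀ g, ‖(prm Γ k ξ - ξ : ℓ²(Γ, ℂ)) g‖ ^ (2 : ℝ≥0∞).toReal ≤ ‖y ⟨k, hk⟩ g‖ := by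
      intro g
      change ‖((√(p (k⁻¹ * g)) : ℝ) : ℂ) - ((√(p g) : ℝ) : ℂ)‖ ^ (2 : ℝ≥0∞).toReal ≤ _
      rw [hpy, two, Real.rpow_natCast, ← Complex.ofReal_sub, Complex.norm_real]
      exact sqrt_sub_sq (hp _) (hp _)
    rw [h1]
    calc _ ≤ ∑' g, ‖y ⟨k, hk⟩ g‖ :=
          Summable.tsum_le_tsum hle ((lp.memℓp (prm Γ k ξ - ξ)).summable (by norm_num)) hs
      _ = ‖y ⟨k, hk⟩‖ := h2.symm
      _ ≤ ‖y‖ := norm_le_pi_norm y _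
      _ < ε := by rwa [dist_zero_left] at hy2

theorem day_net {m : Linf Γ →L[ℂ] ℂ} (hm : St m) (hinv : ∀ k u, m ((ltr Γ).α k u) = m u) :
    ∃ ξ : Finset Γ × ℕ → ℓ²(Γ, ℂ), (∀ i, ‖ξ i‖ = 1) ∧
      ∀ k : Γ, Filter.Tendsto (fun i => ‖prm Γ k (ξ i) - ξ i‖) Filter.atTop (nhds 0) := by
  choose ξ h1 h2 using fun i : Finset Γ × ℕ => day_vec hm hinv i.1 (ε := (1 / ((i.2 : ℝ) + 1)) ^ 2)
    (by positivity)
  refine ⟨ξ, h1, fun k => ?_⟩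
  have h3 : Filter.Tendsto (fun i : Finset Γ × ℕ => 1 / ((i.2 : ℝ) + 1)) Filter.atTop (nhds 0) := by
    rw [← Filter.prod_atTop_atTop_eq]
    exact tendsto_one_div_add_atTop_nhds_zero_nat.comp Filter.tendsto_snd
  refine squeeze_zero' (Filter.Eventually.of_forall fun i => norm_nonneg _) ?_ h3
  filter_upwards [Filter.eventually_ge_atTop (({k} : Finset Γ), 0)] with i hi
  have hk : k ∈ i.1 := hi.1 (by simp)
  exact (abs_lt_of_sq_lt_sq (h2 i k hk) (by positivity)).le.trans' (le_abs_self _)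

end Day


section Nul

variable {I P F : Type*} [NormedAddCommGroup P] [NormedSpace ℂ P] [NormedAddCommGroup F]
  [NormedSpace ℂ F] (l : Filter I)

/-- The submodule on which a net of maps tends to zero. -/
def nul (T : I → P →ₗ[ℂ] F) : Submodule ℂ P where
  carrier := {p | Filter.Tendsto (fun i => T i p) l (nhds 0)}
  add_mem' := by
    intro a b ha hb
    have := Filter.Tendsto.add ha hb
    rw [add_zero] at this
    simpa only [Set.mem_setOf_eq, map_add] using this
  zero_mem' := by
    simp only [Set.mem_setOf_eq, map_zero]
    exact tendsto_const_nhds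
  smul_mem' := by
    intro c a ha
    have := Filter.Tendsto.const_smul ha c
    rw [smul_zero] at this
    simpa only [Set.mem_setOf_eq, _root_.map_smul] using this

theorem mem_nul {T : I → P →ₗ[ℂ] F} {p : P} :
    p ∈ nul l T ↔ Filter.Tendsto (fun i => T i p) l (nhds 0) := Iff.rfl

theorem nul_closed (T : I → P →ₗ[ℂ] F) {C : ℝ} (hC : ∀ i p, ‖T i p‖ ≤ C * ‖p‖) :
    IsClosed (nul l T : Set P) := by
  rw [← closure_subset_iff_isClosed]
  intro p hp
  rw [SetLike.mem_coe, mem_nul, Metric.tendsto_nhds]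
  intro ε hε
  obtain ⟨w, hw, hd⟩ := Metric.mem_closure_iff.1 hp (ε / (2 * (|C| + 1))) (by positivity)
  have hw' := Metric.tendsto_nhds.1 ((mem_nul l).1 hw) (ε / 2) (by positivity)
  filter_upwards [hw'] with i hi
  rw [dist_zero_right] at hi ⊢
  have h1 : T i p = T i (p - w) + T i w := by rw [map_sub, sub_add_cancel]
  rw [h1]
  have h2 : ‖T i (p - w)‖ ≤ (|C| + 1) * ‖p - w‖ :=
    (hC i _).trans (mul_le_mul_of_nonneg_right (by linarith [le_abs_self C]) (norm_nonneg _))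
  rw [dist_eq_norm, lt_div_iff₀ (by positivity)] at hd
  have := norm_add_le (T i (p - w)) (T i w)
  nlinarith

end Nul

section ARel

variable {I E F : Type*} [NormedAddCommGroup E] [NormedSpace ℂ E] [NormedAddCommGroup F]
  [NormedSpace ℂ F] (l : Filter I) (V : I → E →L[ℂ] F)

/-- Asymptotic intertwining. -/
def ARel (a : F →L[ℂ] F) (b : E →L[ℂ] E) : Prop :=
  ∀ v, Filter.Tendsto (fun i => a (V i v) - V i (b v)) l (nhds 0)

/-- The defect, as a function of the pair of operators. -/
def dft (v : E) (i : I) : ((F →L[ℂ] F) × (E →L[ℂ] E)) →ₗ[ℂ] F where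
  toFun p := p.1 (V i v) - V i (p.2 v)
  map_add' p r := by
    change p.1 (V i v) + r.1 (V i v) - V i (p.2 v + r.2 v) = _
    rw [map_add]; abel
  map_smul' c p := by
    change c • p.1 (V i v) - V i (c • p.2 v) = c • (p.1 (V i v) - V i (p.2 v))
    rw [_root_.map_smul, smul_sub]

/-- The defect, as a function of the vector. -/
def dfv (a : F →L[ℂ] F) (b : E →L[ℂ] E) (i : I) : E →ₗ[ℂ] F :=
  (a.comp (V i) - (V i).comp b : E →L[ℂ] F)

/-- The graph of the asymptotic intertwining relation. -/
def relD : Submodule ℂ ((F →L[ℂ] F) × (E →L[ℂ] E)) := ⨅ v, nul l (dft V v)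

theorem mem_relD {a : F →L[ℂ] F} {b : E →L[ℂ] E} : (a, b) ∈ relD l V ↔ ARel l V a b := by
  rw [relD, Submodule.mem_iInf]
  rfl

variable {l V}


theorem relD_closed (hV : ∀ i v, ‖V i v‖ = ‖v‖) : IsClosed (relD l V : Set ((F →L[ℂ] F) × (E →L[ℂ] E))) := by
  rw [relD, Submodule.coe_iInf]
  refine isClosed_iInter fun v => nul_closed l _ (C := ‖v‖ + ‖v‖) ?_
  intro i p
  change ‖p.1 (V i v) - V i (p.2 v)‖ ≤ _
  refine (norm_sub_le _ _).trans ?_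
  rw [hV, add_mul]
  have h1 := p.1.le_opNorm (V i v)
  have h2 := p.2.le_opNorm v
  rw [hV] at h1
  have h3 := mul_le_mul_of_nonneg_right (norm_fst_le p) (norm_nonneg v)
  have h4 := mul_le_mul_of_nonneg_right (norm_snd_le p) (norm_nonneg v)
  linarith

theorem rel_norm [l.NeBot] (hV : ∀ i v, ‖V i v‖ = ‖v‖) {a : F →L[ℂ] F} {b : E →L[ℂ] E} (h : ARel l V a b) : ‖b‖ ≤ ‖a‖ := by
  refine ContinuousLinearMap.opNorm_le_bound _ (norm_nonneg _) fun v => ?_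
  have h1 : Filter.Tendsto (fun i => ‖a (V i v) - V i (b v)‖ + ‖a‖ * ‖v‖) l
      (nhds (0 + ‖a‖ * ‖v‖)) := by
    have := (h v).norm
    rw [norm_zero] at this
    exact this.add_const _
  rw [zero_add] at h1
  refine ge_of_tendsto h1 (Filter.Eventually.of_forall fun i => ?_)
  have h2 := a.le_opNorm (V i v)
  rw [hV] at h2
  have h3 := norm_sub_le (a (V i v)) (a (V i v) - V i (b v))
  rw [sub_sub_cancel, hV] at h3
  linarith

theorem rel_mul {a a' : F →L[ℂ] F} {b b' : E →L[ℂ] E} (h : ARel l V a b) (h' : ARel l V a' b') :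
    ARel l V (a * a') (b * b') := by
  intro v
  have h1 := (h (b' v)).add ((a.continuous.tendsto 0).comp (h' v))
  rw [map_zero, add_zero] at h1
  refine h1.congr fun i => ?_
  simp only [Function.comp_apply, map_sub, ContinuousLinearMap.mul_apply]
  abel

theorem rel_unique [l.NeBot] (hV : ∀ i v, ‖V i v‖ = ‖v‖) {a : F →L[ℂ] F} {b b' : E →L[ℂ] E} (h : ARel l V a b)
    (h' : ARel l V a b') : b = b' := by
  have h1 := (relD l V).sub_mem ((mem_relD l V).2 h) ((mem_relD l V).2 h')
  rw [Prod.mk_sub_mk, sub_self, mem_relD] at h1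
  have := rel_norm hV h1
  rw [norm_zero, norm_le_zero_iff, sub_eq_zero] at this
  exact this

theorem rel_dom_closed [l.NeBot] (hV : ∀ i v, ‖V i v‖ = ‖v‖) [CompleteSpace E] [CompleteSpace F] :
    IsClosed {a : F →L[ℂ] F | ∃ b, ARel l V a b} := by
  haveI : CompleteSpace (relD l V) := (relD_closed hV).completeSpace_coe
  have hi : Isometry (fun p : relD l V => p.1.1) := by
    refine AddMonoidHomClass.isometry_of_norm
      ((LinearMap.fst ℂ (F →L[ℂ] F) (E →L[ℂ] E)).comp (relD l V).subtype) ?_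
    rintro ⟨⟨a, b⟩, hab⟩
    change ‖a‖ = max ‖a‖ ‖b‖
    rw [max_eq_left (rel_norm hV ((mem_relD l V).1 hab))]
  have hr := hi.isClosedEmbedding.isClosed_range
  suffices h : {a : F →L[ℂ] F | ∃ b, ARel l V a b} = Set.range (fun p : relD l V => p.1.1) by
    rw [h]; exact hr
  apply Set.ext
  intro a
  constructor
  · rintro ⟨b, hb⟩
    exact ⟨⟨(a, b), (mem_relD l V).2 hb⟩, rfl⟩
  · rintro ⟨⟨⟨a', b⟩, hab⟩, rfl⟩
    exact ⟨b, (mem_relD l V).1 hab⟩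

theorem rel_of_single {Y : Type*} {W : I → ℓ²(Y, ℂ) →L[ℂ] F} (hW : ∀ i v, ‖W i v‖ = ‖v‖)
    {a : F →L[ℂ] F} {b : BO Y} [DecidableEq Y]
    (h : ∀ y, Filter.Tendsto
      (fun i => a (W i (lp.single 2 y (1 : ℂ))) - W i (b (lp.single 2 y (1 : ℂ)))) l (nhds 0)) :
    ARel l W a b := by
  have hc : IsClosed (nul l (dfv W a b) : Set ℓ²(Y, ℂ)) := by
    refine nul_closed l _ (C := ‖a‖ + ‖b‖) ?_
    intro i v
    change ‖a (W i v) - W i (b v)‖ ≤ _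
    refine (norm_sub_le _ _).trans ?_
    have h1 := a.le_opNorm (W i v)
    have h2 := b.le_opNorm v
    rw [hW] at h1
    rw [hW, add_mul]
    linarith
  intro v
  change v ∈ nul l (dfv W a b)
  refine hc.mem_of_tendsto (lp.hasSum_single (by norm_num) v) (Filter.Eventually.of_forall fun s => ?_)
  refine Submodule.sum_mem _ fun y _ => ?_
  have h1 : lp.single 2 y (v y) = v y • (lp.single 2 y (1 : ℂ) : ℓ²(Y, ℂ)) := by
    rw [← lp.single_smul, smul_eq_mul, mul_one]
  rw [h1]
  exact Submodule.smul_mem _ _ (h y)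

end ARel

theorem bo_norm_star {Y : Type*} (T : BO Y) : ‖star T‖ = ‖T‖ := by
  rw [ContinuousLinearMap.star_eq_adjoint]
  exact LinearIsometryEquiv.norm_map _ _

section Cosets

variable {G : Type u} [Group G] (H : Subgroup G)

/-- The subgroup component. -/
def kap (g : G) : H := ⟨(Quotient.out (g : G ⧸ H))⁻¹ * g, by
  rw [← QuotientGroup.eq, QuotientGroup.out_eq']⟩

theorem kap_coe (g : G) : (kap H g : G) = (Quotient.out (g : G ⧸ H))⁻¹ * g := rfl

theorem kap_mul (g : G) (h : H) : kap H (g * h) = kap H g * h := by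
  apply Subtype.ext
  rw [kap_coe, Subgroup.coe_mul, kap_coe, QuotientGroup.mk_mul_of_mem g h.2, mul_assoc]

/-- Coset decomposition. -/
def cosE : G ≃ (G ⧸ H) × H where
  toFun g := ((g : G ⧸ H), kap H g)
  invFun p := Quotient.out p.1 * p.2
  left_inv g := by
    change Quotient.out (g : G ⧸ H) * (kap H g : G) = g
    rw [kap_coe, mul_inv_cancel_left]
  right_inv p := by
    have h1 : ((Quotient.out p.1 * (p.2 : G) : G) : G ⧸ H) = p.1 := by
      rw [QuotientGroup.mk_mul_of_mem _ p.2.2, QuotientGroup.out_eq']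
    refine Prod.ext h1 (Subtype.ext ?_)
    change (kap H (Quotient.out p.1 * (p.2 : G)) : G) = _
    rw [kap_coe, h1, inv_mul_cancel_left]

variable {H}

theorem vfn_hasSum (ξ : ℓ²(H, ℂ)) (v : ℓ²(G ⧸ H, ℂ)) :
    HasSum (fun g : G => ‖v (g : G ⧸ H) * ξ (kap H g)‖ ^ (2 : ℝ≥0∞).toReal)
      (‖v‖ ^ (2 : ℝ≥0∞).toReal * ‖ξ‖ ^ (2 : ℝ≥0∞).toReal) := by
  have h1 := lp.hasSum_norm (by norm_num : 0 < (2 : ℝ≥0∞).toReal) v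
  have h2 := lp.hasSum_norm (by norm_num : 0 < (2 : ℝ≥0∞).toReal) ξ
  have h3 := h1.mul h2 (h1.summable.mul_of_nonneg h2.summable
    (fun _ => Real.rpow_nonneg (norm_nonneg _) _) (fun _ => Real.rpow_nonneg (norm_nonneg _) _))
  have h4 := (cosE H).hasSum_iff.2 h3
  refine h4.congr_fun ?_
  intro g
  rw [norm_mul, Real.mul_rpow (norm_nonneg _) (norm_nonneg _)]
  rfl

/-- The vector `v ⊗ ξ`. -/
def vfn (ξ : ℓ²(H, ℂ)) (v : ℓ²(G ⧸ H, ℂ)) : ℓ²(G, ℂ) :=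
  ⟨fun g => v (g : G ⧸ H) * ξ (kap H g), memℓp_gen (vfn_hasSum ξ v).summable⟩

theorem vfn_apply (ξ : ℓ²(H, ℂ)) (v : ℓ²(G ⧸ H, ℂ)) (g : G) :
    vfn ξ v g = v (g : G ⧸ H) * ξ (kap H g) := rfl

theorem vfn_norm (ξ : ℓ²(H, ℂ)) (v : ℓ²(G ⧸ H, ℂ)) : ‖vfn ξ v‖ = ‖v‖ * ‖ξ‖ := by
  have h0 : (0 : ℝ) < (2 : ℝ≥0∞).toReal := by norm_num
  have h1 := lp.hasSum_norm h0 (vfn ξ v)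
  have h2 := h1.unique (vfn_hasSum ξ v)
  rw [← Real.mul_rpow (norm_nonneg _) (norm_nonneg _)] at h2
  exact (Real.rpow_left_inj (norm_nonneg _) (mul_nonneg (norm_nonneg _) (norm_nonneg _)) h0.ne').1 h2

/-- The isometry `v ↦ v ⊗ ξ`. -/
def vL (ξ : ℓ²(H, ℂ)) : ℓ²(G ⧸ H, ℂ) →L[ℂ] ℓ²(G, ℂ) :=
  LinearMap.mkContinuous
    { toFun := vfn ξ
      map_add' := by
        intro v w; ext g
        change (v _ + w _) * ξ _ = v _ * ξ _ + w _ * ξ _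
        ring
      map_smul' := by
        intro c v; ext g
        change (c * v _) * ξ _ = c * (v _ * ξ _)
        ring }
    ‖ξ‖ (fun v => by
      change ‖vfn ξ v‖ ≤ _
      rw [vfn_norm, mul_comm])

theorem vL_norm (ξ : ℓ²(H, ℂ)) (v : ℓ²(G ⧸ H, ℂ)) : ‖vL ξ v‖ = ‖v‖ * ‖ξ‖ := vfn_norm ξ v

theorem vL_apply (ξ : ℓ²(H, ℂ)) (v : ℓ²(G ⧸ H, ℂ)) (g : G) :
    vL ξ v g = v (g : G ⧸ H) * ξ (kap H g) := rfl

theorem vL_sub (ξ η : ℓ²(H, ℂ)) (v : ℓ²(G ⧸ H, ℂ)) : vL (ξ - η) v = vL ξ v - vL η v := by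
  ext g
  change v _ * (ξ _ - η _) = v _ * ξ _ - v _ * η _
  ring

open Classical in
theorem vL_prm (s : G) (x : G ⧸ H) : ∃ k : H, ∀ ξ : ℓ²(H, ℂ),
    prm G s (vL ξ (lp.single 2 x (1 : ℂ))) = vL (prm H k ξ) (lp.single 2 (s • x) (1 : ℂ)) := by
  refine ⟨kap H (s * Quotient.out x), fun ξ => ?_⟩
  ext g
  rw [prm_apply, vL_apply, vL_apply, lp.coeFn_single, lp.coeFn_single, Pi.single_apply,
    Pi.single_apply, prm_apply]
  have hx : ((s * Quotient.out x : G) : G ⧸ H) = s • x := by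
    rw [← QuotientGroup.out_eq' (s • x), QuotientGroup.out_eq']
    conv_rhs => rw [← QuotientGroup.out_eq' x]
    rfl
  have hc : ((s⁻¹ • g : G) : G ⧸ H) = x ↔ (g : G ⧸ H) = s • x := by
    rw [← inv_smul_eq_iff]; rfl
  by_cases h : (g : G ⧸ H) = s • x
  · rw [if_pos (hc.2 h), if_pos h]
    refine congrArg (fun z => 1 * ξ z) ?_
    apply Subtype.ext
    rw [kap_coe, hc.2 h, smul_eq_mul, smul_eq_mul, Subgroup.coe_mul, Subgroup.coe_inv, kap_coe, kap_coe, hx, h]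
    group
  · rw [if_neg h, if_neg (fun h' => h (hc.1 h')), zero_mul, zero_mul]

theorem exists_inv_mean {q : Linf G →L[ℂ] ℂ} (hq : St q)
    (hH : ∀ h ∈ H, ∀ f, q ((ltr G).α h f) = q f) :
    ∃ m : Linf H →L[ℂ] ℂ, St m ∧ ∀ (k : H) u, m ((ltr H).α k u) = m u := by
  let r : G → H := fun g => (kap H g⁻¹)⁻¹
  have hr : ∀ (h : H) g, r (h * g) = h * r g := by
    intro h g
    change (kap H (h * g)⁻¹)⁻¹ = _
    rw [mul_inv_rev, ← Subgroup.coe_inv, kap_mul, mul_inv_rev, inv_inv]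
  refine ⟨pb (pull r) q, hq.pb _, fun k u => ?_⟩
  rw [pb_apply, pb_apply, ← hH k k.2 (pull r u)]
  congr 1
  ext g
  rw [pull_apply, ltr_apply, ltr_apply, pull_apply, ← Subgroup.coe_inv, hr]

theorem exists_rel_net {q : Linf G →L[ℂ] ℂ} (hq : St q)
    (hH : ∀ h ∈ H, ∀ f, q ((ltr G).α h f) = q f) :
    ∃ V : Finset H × ℕ → ℓ²(G ⧸ H, ℂ) →L[ℂ] ℓ²(G, ℂ), (∀ i v, ‖V i v‖ = ‖v‖) ∧
      ∀ s : G, ARel Filter.atTop V (prm G s) (prm (G ⧸ H) s) := by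
  classical
  obtain ⟨m, hm, hinv⟩ := exists_inv_mean hq hH
  obtain ⟨ξ, h1, h2⟩ := day_net hm hinv
  have hV : ∀ i v, ‖vL (ξ i) v‖ = ‖v‖ := fun i v => by rw [vL_norm, h1, mul_one]
  refine ⟨fun i => vL (ξ i), hV, fun s => rel_of_single hV fun x => ?_⟩
  obtain ⟨k, hk⟩ := vL_prm s x
  rw [tendsto_zero_iff_norm_tendsto_zero]
  refine (h2 k).congr fun i => ?_
  rw [hk]
  have : prm (G ⧸ H) s (lp.single 2 x (1 : ℂ)) = lp.single 2 (s • x) (1 : ℂ) := by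
    convert prm_single s x
  rw [this, ← vL_sub, vL_norm, lp.norm_single (by norm_num)]
  simp

theorem exists_qrep_aux {q : Linf G →L[ℂ] ℂ} (hq : St q)
    (hH : ∀ h ∈ H, ∀ f, q ((ltr G).α h f) = q f) :
    ∃ p : redCstar G → BO (G ⧸ H), (∀ a b, p (a + b) = p a + p b) ∧
      (∀ (c : ℂ) a, p (c • a) = c • p a) ∧ p 1 = 1 ∧ (∀ a b, p (a * b) = p a * p b) ∧
      (∀ a, ‖p a‖ ≤ ‖a‖) ∧ ∀ g, p (uu g) = prm (G ⧸ H) g := by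
  classical
  obtain ⟨V, hV, hrel⟩ := exists_rel_net hq hH
  have hrel' : ∀ s : G, ARel Filter.atTop V ((uu s : redCstar G) : BO G) (prm (G ⧸ H) s) := by
    intro s; rw [uu_coe]; exact hrel s
  have hex : ∀ a : redCstar G, ∃ b, ARel Filter.atTop V (a : BO G) b := by
    intro a
    have hc := rel_dom_closed hV (l := Filter.atTop)
    refine hc.closure_subset (Metric.mem_closure_iff.2 fun ε hε => ?_)
    obtain ⟨s, hs, hd⟩ := red_approx a hε
    refine ⟨(s : BO G), ?_, by rw [dist_eq_norm]; exact hd⟩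
    clear hd
    induction hs using Submodule.span_induction with
    | mem x h =>
      obtain ⟨g, rfl⟩ := h
      exact ⟨_, hrel' g⟩
    | zero =>
      exact ⟨0, (mem_relD _ V).1 (relD Filter.atTop V).zero_mem⟩
    | add x y _ _ hx hy =>
      obtain ⟨b, hb⟩ := hx
      obtain ⟨c, hc⟩ := hy
      exact ⟨b + c, (mem_relD _ V).1
        ((relD Filter.atTop V).add_mem ((mem_relD _ V).2 hb) ((mem_relD _ V).2 hc))⟩
    | smul c x _ hx =>
      obtain ⟨b, hb⟩ := hx
      exact ⟨c • b, (mem_relD _ V).1 ((relD Filter.atTop V).smul_mem c ((mem_relD _ V).2 hb))⟩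
  choose p hp using hex
  have hu : ∀ {a : redCstar G} {b}, ARel Filter.atTop V (a : BO G) b → p a = b := fun h =>
    rel_unique hV (hp _) h
  have hadd : ∀ a b, p (a + b) = p a + p b := fun a b =>
    hu ((mem_relD _ V).1 ((relD Filter.atTop V).add_mem ((mem_relD _ V).2 (hp a))
      ((mem_relD _ V).2 (hp b))))
  have hsmul : ∀ (c : ℂ) a, p (c • a) = c • p a := fun c a =>
    hu ((mem_relD _ V).1 ((relD Filter.atTop V).smul_mem c ((mem_relD _ V).2 (hp a))))
  have hone : p 1 = 1 := by
    apply hu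
    have := hrel 1
    rwa [prm_one, prm_one] at this
  have hmul : ∀ a b, p (a * b) = p a * p b := fun a b => hu (rel_mul (hp a) (hp b))
  have hnorm : ∀ a, ‖p a‖ ≤ ‖a‖ := fun a => rel_norm hV (hp a)
  have huu : ∀ g, p (uu g) = prm (G ⧸ H) g := fun g => hu (hrel' g)
  exact ⟨p, hadd, hsmul, hone, hmul, hnorm, huu⟩

theorem qrep_star {p : redCstar G → BO (G ⧸ H)} (hadd : ∀ a b, p (a + b) = p a + p b)
    (hsmul : ∀ (c : ℂ) a, p (c • a) = c • p a) (hnorm : ∀ a, ‖p a‖ ≤ ‖a‖)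
    (huu : ∀ g, p (uu g) = prm (G ⧸ H) g) (a : redCstar G) : p (star a) = star (p a) := by
  let P1 : redCstar G →L[ℂ] BO (G ⧸ H) :=
    LinearMap.mkContinuous { toFun := p, map_add' := hadd, map_smul' := hsmul } 1
      (fun a => by rw [one_mul]; exact hnorm a)
  have e1 : ∀ a b : redCstar G, star (p (star (a + b))) = star (p (star a)) + star (p (star b)) :=
    fun a b => by rw [star_add, hadd, star_add]
  have e2 : ∀ (c : ℂ) (a : redCstar G), star (p (star (c • a))) = c • star (p (star a)) := by
    intro c a
    have h1 : star (c • a) = star c • star a := star_smul c a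
    rw [h1, hsmul, star_smul (star c) (p (star a)), star_star]
  have e3 : ∀ a : redCstar G, ‖star (p (star a))‖ ≤ 1 * ‖a‖ := by
    intro a
    have h1 : ‖star (p (star a))‖ = ‖p (star a)‖ := bo_norm_star _
    have h2 : ‖star (a : BO G)‖ = ‖(a : BO G)‖ := bo_norm_star _
    have h3 : ‖star a‖ = ‖a‖ := h2
    have h4 := hnorm (star a)
    linarith
  let P0 : redCstar G →ₗ[ℂ] BO (G ⧸ H) :=
    { toFun := fun a => star (p (star a)), map_add' := e1, map_smul' := e2 }
  let P2 : redCstar G →L[ℂ] BO (G ⧸ H) := LinearMap.mkContinuous P0 1 e3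
  have hP : P1 = P2 := by
    apply red_ext
    intro s
    change p (uu s) = star (p (star (uu s)))
    rw [uu_star, huu, huu, prm_star, inv_inv]
  have h1 : P1 (star a) = P2 (star a) := by rw [hP]
  change p (star a) = star (p (star (star a))) at h1
  rw [star_star] at h1
  exact h1

theorem exists_qrep {q : Linf G →L[ℂ] ℂ} (hq : St q)
    (hH : ∀ h ∈ H, ∀ f, q ((ltr G).α h f) = q f) :
    ∃ π : redCstar G →⋆ₐ[ℂ] BO (G ⧸ H), ∀ g, π (uu g) = prm (G ⧸ H) g := by
  obtain ⟨p, hadd, hsmul, hone, hmul, hnorm, huu⟩ := exists_qrep_aux hq hH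
  refine ⟨{ toFun := p
            map_one' := hone
            map_mul' := hmul
            map_zero' := by simpa using hsmul 0 0
            map_add' := hadd
            commutes' := fun c => by
              rw [Algebra.algebraMap_eq_smul_one, Algebra.algebraMap_eq_smul_one, hsmul, hone]
            map_star' := qrep_star hadd hsmul hnorm huu }, huu⟩

end Cosets


section Forward

variable {G : Type u} [Group G]

theorem exists_St_ext {A B : Type*} [NormedAddCommGroup A] [NormedSpace ℂ A] [One A] [CStarAlgebra B]
    (j : A →ₗ[ℂ] B) (hj : ∀ a, ‖j a‖ = ‖a‖) (j1 : j 1 = 1)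
    (φ : A →L[ℂ] ℂ) (h1 : φ 1 = 1) (hφ : ∀ a, ‖φ a‖ ≤ ‖a‖) :
    ∃ χ : B →L[ℂ] ℂ, St χ ∧ ∀ a, χ (j a) = φ a := by
  have hinj : Function.Injective j := by
    rw [injective_iff_map_eq_zero]
    intro a ha
    rw [← norm_eq_zero, ← hj, ha, norm_zero]
  let e := LinearEquiv.ofInjective j hinj
  have he : ∀ x, ‖e.symm x‖ = ‖x‖ := by
    intro x
    obtain ⟨a, rfl⟩ := e.surjective x
    rw [e.symm_apply_apply, ← hj]
    rfl
  let f : (LinearMap.range j) →L[ℂ] ℂ :=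
    LinearMap.mkContinuous (φ.toLinearMap.comp e.symm.toLinearMap) 1 (fun x => by
      rw [one_mul, ← he]; exact hφ _)
  have hf : ‖f‖ ≤ 1 := LinearMap.mkContinuous_norm_le _ zero_le_one _
  obtain ⟨χ, hχ, hn⟩ := exists_extension_norm_eq (LinearMap.range j) f
  have hχj : ∀ a, χ (j a) = φ a := by
    intro a
    have h2 := hχ (e a)
    have h3 : f (e a) = φ a := by
      change φ (e.symm (e a)) = φ a
      rw [e.symm_apply_apply]
    rw [h3] at h2
    exact h2
  refine ⟨χ, ⟨?_, ?_⟩, hχj⟩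
  · rw [← j1, hχj, h1]
  · intro b
    refine (χ.le_opNorm b).trans ?_
    rw [hn]
    exact mul_le_of_le_one_left (norm_nonneg _) hf

/-- Stabilizer of a mean. -/
def stab (q : Linf G →L[ℂ] ℂ) : Subgroup G where
  carrier := {h | ∀ f, q ((ltr G).α h f) = q f}
  mul_mem' := by
    intro a b ha hb f
    rw [GAct.mul, ha, hb]
  one_mem' := by
    intro f
    rw [GAct.one]
  inv_mem' := by
    intro a ha f
    have := ha ((ltr G).α a⁻¹ f)
    rw [← GAct.mul, mul_inv_cancel, GAct.one] at this
    exact this.symm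

theorem mem_stab {q : Linf G →L[ℂ] ℂ} {h : G} :
    h ∈ stab q ↔ ∀ f, q ((ltr G).α h f) = q f := Iff.rfl

variable {q : Linf G →L[ℂ] ℂ} {L : Set (Linf G →L[ℂ] ℂ)}

theorem psi_off (Hq : Good q L) {χ : BO G →L[ℂ] ℂ} (hχ : St χ) {s : G} (hs : s ∉ stab q) :
    (cj G G).conv q χ (prm G s) = 0 := by
  rw [mem_stab] at hs
  push Not at hs
  obtain ⟨f, hf⟩ := hs
  have hc := cov (Y := G) (q := q) (G := G) id (fun f g y => rfl)
  have h1 := (K_main Hq (cj G G) cj_one _ hc hχ f (prm G s)).2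
  have h2 := (K_main Hq (cj G G) cj_one _ hc hχ ((ltr G).α s f) (prm G s)).1
  have h3 := hc f s⁻¹
  rw [inv_inv, cj_apply] at h3
  rw [← h3, mul_assoc, prm_inv_mul, mul_one, h1] at h2
  by_contra hne
  exact hf (mul_right_cancel₀ hne h2).symm

theorem Phi_transl {E : Type*} [NormedAddCommGroup E] [NormedSpace ℂ E] (a : GAct G E)
    (χ : E →L[ℂ] ℂ) (T : E) (g : G) : (ltr G).α g (a.Phi χ T) = a.Phi χ (a.α g T) := by
  ext x
  rw [ltr_apply, GAct.Phi_apply, GAct.Phi_apply, ← GAct.mul, mul_inv_rev, inv_inv]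

theorem out_hσ (f : Linf G) (g : G) (y : G ⧸ stab q) :
    (ltr G).Phi q f (Quotient.out (g • y)) = (ltr G).Phi q f (g * Quotient.out y) := by
  have h1 : (Quotient.out (g • y))⁻¹ * (g * Quotient.out y) ∈ stab q := by
    rw [← QuotientGroup.eq, QuotientGroup.out_eq']
    conv_lhs => rw [← QuotientGroup.out_eq' y]
    rfl
  rw [GAct.Phi_apply, GAct.Phi_apply]
  have h2 := (mem_stab.1 h1) ((ltr G).α (g * Quotient.out y)⁻¹ f)
  rw [← GAct.mul] at h2
  rw [← h2]
  congr 3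
  group

theorem simple_inj (hs : IsCstarSimple G) {Y : Type*} [MulAction G Y]
    (π : redCstar G →⋆ₐ[ℂ] BO Y) (h1 : (1 : BO Y) ≠ 0) : ∀ a, ‖π a‖ = ‖a‖ := by
  haveI := redCstar_closed (G := G)
  have hcont : Continuous π :=
    AddMonoidHomClass.continuous_of_bound π 1 (fun a => by
      rw [one_mul]; exact NonUnitalStarAlgHom.norm_apply_le π a)
  have hcl : IsClosed ((TwoSidedIdeal.ker π : TwoSidedIdeal (redCstar G)) : Set (redCstar G)) := by
    have h2 : IsClosed (π ⁻¹' {0}) := isClosed_singleton.preimage hcont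
    convert h2 using 1
    apply Set.ext
    intro a
    exact TwoSidedIdeal.mem_ker π
  have hinj : Function.Injective π := by
    rcases hs _ hcl with h | h
    · exact TwoSidedIdeal.ker_eq_bot π |>.1 h
    · exfalso
      have h3 : (1 : redCstar G) ∈ TwoSidedIdeal.ker π := by rw [h]; trivial
      rw [TwoSidedIdeal.mem_ker, map_one] at h3
      exact h1 h3
  exact fun a => NonUnitalStarAlgHom.norm_map π hinj a

theorem tau_one : tau G 1 = 1 := by
  rw [← uu_one, tau_uu, if_pos rfl]

theorem deltaOne_norm : ‖deltaOne (G := G)‖ = 1 := by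
  classical
  rw [deltaOne_eq, lp.norm_single (by norm_num)]
  simp

theorem tau_norm (a : redCstar G) : ‖tau G a‖ ≤ ‖a‖ := by
  rw [tau_apply]
  refine (norm_inner_le_norm _ _).trans ?_
  rw [deltaOne_norm, one_mul]
  refine ((a : BO G).le_opNorm _).trans ?_
  rw [deltaOne_norm, mul_one]
  rfl

theorem psi_claim (hs : IsCstarSimple G) (Hq : Good q L) {χ : BO G →L[ℂ] ℂ} (hχ : St χ)
    {s : G} (hne : s ≠ 1) : (cj G G).conv q χ (prm G s) = 0 := by
  by_contra hc
  set f0 := (cj G G).Phi χ (prm G s) with hf0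
  have hqf : (cj G G).conv q χ (prm G s) = q f0 := rfl
  have hd : ∀ g, (ltr G).Phi q f0 g ≠ 0 → g⁻¹ * s * g ∈ stab q := by
    intro g hg
    by_contra hn
    apply hg
    rw [GAct.Phi_apply, hf0, Phi_transl, cj_apply, inv_inv, ← prm_mul, ← prm_mul]
    exact psi_off Hq hχ hn
  obtain ⟨π, hπ⟩ := exists_qrep Hq.qst (H := stab q) (fun h hh => hh)
  have h10 : (1 : BO (G ⧸ stab q)) ≠ 0 := by
    classical
    intro h
    have h2 := congrArg (fun T : BO (G ⧸ stab q) => T (lp.single 2 ((1 : G) : G ⧸ stab q) (1 : ℂ))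
      ((1 : G) : G ⧸ stab q)) h
    simp at h2
  have hiso := simple_inj hs π h10
  obtain ⟨ω, hω, hωπ⟩ := exists_St_ext (π : redCstar G →⋆ₐ[ℂ] BO (G ⧸ stab q)).toAlgHom.toLinearMap
    hiso (map_one π) (tau G) tau_one tau_norm
  have hz : (cj G (G ⧸ stab q)).conv q ω (prm (G ⧸ stab q) s) = 0 := by
    have : (cj G (G ⧸ stab q)).Phi ω (prm (G ⧸ stab q) s) = 0 := by
      ext g
      rw [GAct.Phi_apply, cj_apply, inv_inv, ← prm_mul, ← prm_mul, ← hπ]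
      refine ((hωπ _).trans (tau_uu _)).trans ?_
      rw [if_neg]
      · rfl
      · intro h
        apply hne
        have : s = g * (g⁻¹ * s * g) * g⁻¹ := by group
        rw [this, h]; group
    rw [GAct.conv_apply, this, map_zero]
  have hcv := cov (Y := G ⧸ stab q) (q := q) (G := G) Quotient.out out_hσ
  have k1 := K_one Hq (cj G (G ⧸ stab q)) _ hcv hω f0
  have k2 := (K_main Hq (cj G (G ⧸ stab q)) cj_one _ hcv hω f0 (prm (G ⧸ stab q) s)).1
  have hfix : ((mulH (G ⧸ stab q)).comp (pull Quotient.out)) ((ltr G).Phi q f0) * prm (G ⧸ stab q) s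
      = ((mulH (G ⧸ stab q)).comp (pull Quotient.out)) ((ltr G).Phi q f0) := by
    ext ξ y
    change (ltr G).Phi q f0 (Quotient.out y) * ξ (s⁻¹ • y) = (ltr G).Phi q f0 (Quotient.out y) * ξ y
    by_cases h0 : (ltr G).Phi q f0 (Quotient.out y) = 0
    · rw [h0, zero_mul, zero_mul]
    · have h1 := hd _ h0
      have h2 : s⁻¹ • y = y := by
        have h3 : ((s⁻¹ * Quotient.out y : G) : G ⧸ stab q) = ((Quotient.out y : G) : G ⧸ stab q) := by
          rw [QuotientGroup.eq]
          convert h1 using 1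
          group
        rw [QuotientGroup.out_eq'] at h3
        conv_lhs => rw [← QuotientGroup.out_eq' y]
        exact h3
      rw [h2]
  rw [hfix, k1, hz, mul_zero] at k2
  exact hc (hqf.trans k2)

variable (G) in
/-- Inclusion. -/
def redJ : redCstar G →L[ℂ] BO G :=
  { toLinearMap := (redCstar G).subtype.toAlgHom.toLinearMap, cont := continuous_subtype_val }

theorem redJ_apply (a : redCstar G) : redJ G a = (a : BO G) := rfl

theorem redJ_norm (a : redCstar G) : ‖redJ G a‖ = ‖a‖ := rfl

theorem redJ_one : redJ G 1 = 1 := rfl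

theorem state_ext (φ : WeakDual ℂ (redCstar G)) (hφ : IsState φ) :
    ∃ χ : BO G →L[ℂ] ℂ, St χ ∧ ∀ a : redCstar G, χ (a : BO G) = φ a := by
  obtain ⟨χ, hχ, hχφ⟩ := exists_St_ext (redJ G).toLinearMap redJ_norm redJ_one
    (WeakDual.toStrongDual φ) hφ.1 (state_norm φ hφ)
  exact ⟨χ, hχ, hχφ⟩

theorem psi_tau (hs : IsCstarSimple G) (Hq : Good q L) {χ : BO G →L[ℂ] ℂ} (hχ : St χ)
    (a : redCstar G) : (cj G G).conv q χ (a : BO G) = tau G a := by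
  classical
  have hψ : ((cj G G).conv q χ).comp (redJ G) = (WeakDual.toStrongDual (tau G)) := by
    apply red_ext
    intro s
    have h1 : (cj G G).conv q χ ((uu s : redCstar G) : BO G) = tau G (uu s) := by
      rw [uu_coe, tau_uu]
      split_ifs with h
      · rw [h, prm_one]
        exact (St.conv _ cj_one Hq.qst hχ).1
      · exact psi_claim hs Hq hχ h
    exact h1
  exact DFunLike.congr_fun hψ a

theorem dualAct_apply (g : G) (φ : WeakDual ℂ (redCstar G)) (a : redCstar G) :
    dualAct g φ a = φ (uu g⁻¹ * a * uu g) := rfl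

theorem uu_conj_coe (g : G) (a : redCstar G) :
    ((uu g⁻¹ * a * uu g : redCstar G) : BO G) = prm G g⁻¹ * (a : BO G) * prm G g := by
  rw [MulMemClass.coe_mul, MulMemClass.coe_mul, uu_coe, uu_coe]

theorem Phi_dualAct {χ : BO G →L[ℂ] ℂ} {φ : WeakDual ℂ (redCstar G)}
    (h : ∀ a : redCstar G, χ (a : BO G) = φ a) (a : redCstar G) (g : G) :
    (cj G G).Phi χ (a : BO G) g = dualAct g φ a := by
  rw [dualAct_apply, ← h, uu_conj_coe, GAct.Phi_apply, cj_apply, inv_inv]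

theorem forward (hs : IsCstarSimple G) (φ : WeakDual ℂ (redCstar G)) (hφ : IsState φ) :
    tau G ∈ closure (convexHull ℝ {ψ : WeakDual ℂ (redCstar G) | ∃ g : G, ψ = dualAct g φ}) := by
  obtain ⟨q, L, Hq⟩ := exists_good G
  obtain ⟨χ, hχ, hχφ⟩ := state_ext φ hφ
  have h2 : ∀ a : redCstar G, tau G a = q ((cj G G).Phi χ (a : BO G)) :=
    fun a => (psi_tau hs Hq hχ a).symm
  exact conclude φ Hq.qst (fun a => (cj G G).Phi χ (a : BO G)) (Phi_dualAct hχφ) h2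

end Forward

/-- A discrete group is C*-simple if and only if for every state `φ` on `C*_λ(G)` the weak*
closed convex hull of the `G`-orbit of `φ` contains the canonical trace. -/
theorem cstarSimple_iff_trace_in_closed_convex_orbit_of_states (G : Type u) [Group G] :
    IsCstarSimple G ↔
      ∀ φ : WeakDual ℂ (redCstar G), IsState φ →
        tau G ∈ closure (convexHull ℝ {ψ : WeakDual ℂ (redCstar G) | ∃ g : G, ψ = dualAct g φ}) := by
  exact ⟨fun hs φ hφ => forward hs φ hφ, fun h => backward h⟩
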